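/- For every ε > 0 there exist R > 0 and h₀ > 0 such that for every h with 0 < h ≤ h₀ one has |Q − Q^{h,R}| ≤ ε; that is, the truncated lattice discrete-velocity sum approximates the continuous two-dimensional collision integral to within any prescribed accuracy. -/

import Mathlib

/-- The set of lattice points `(x, y) ∈ ℤ²` with `x² + y² = n`. -/
noncomputable def latticeCircle (n : ℕ) : Finset (ℤ × ℤ) :=
  (Finset.Icc (-(n : ℤ)) (n : ℤ) ×ˢ Finset.Icc (-(n : ℤ)) (n : ℤ)).filter
    (fun p => p.1 ^ 2 + p.2 ^ 2 = (n : ℤ))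

/-- `r n` is the number of lattice points on the circle of squared radius `n`. -/
noncomputable def latticeR (n : ℕ) : ℕ := (latticeCircle n).card

/-- The angle `θ_u ∈ [0, 2π)` of a lattice point `u`. -/
noncomputable def latticeTheta (u : ℤ × ℤ) : ℝ :=
  if 0 ≤ Complex.arg ((u.1 : ℂ) + (u.2 : ℂ) * Complex.I)
  then Complex.arg ((u.1 : ℂ) + (u.2 : ℂ) * Complex.I)
  else Complex.arg ((u.1 : ℂ) + (u.2 : ℂ) * Complex.I) + 2 * Real.pi

/-- The exponential sum `S(m, k) = Σ_{u ∈ ℤ², |u|² = m} exp(i k θ_u)`. -/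
noncomputable def latticeS (m : ℕ) (k : ℤ) : ℂ :=
  ∑ u ∈ latticeCircle m, Complex.exp ((k : ℂ) * (latticeTheta u : ℂ) * Complex.I)


/-- The continuous collision value `Q = ∫_{ℝ²} (1/2π) ∫_{-π}^{π} g(w,θ) dθ dw`. -/
noncomputable def Qcont (g : ℝ × ℝ → ℝ → ℝ) : ℝ :=
  ∫ w : ℝ × ℝ, (1 / (2 * Real.pi)) * ∫ θ in (-Real.pi)..Real.pi, g w θ

/-- The truncated lattice discrete-velocity approximation
`Q^{h,R} = h² Σ_{ζ ∈ ℤ², 0 < |hζ| ≤ R} (1/r(|ζ|²)) Σ_{|ζ'| = |ζ|} g(hζ, θ_{ζ'} - θ_ζ)`. -/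
noncomputable def Qdisc (g : ℝ × ℝ → ℝ → ℝ) (h R : ℝ) : ℝ :=
  h ^ 2 *
    ∑ᶠ ζ ∈ {ζ : ℤ × ℤ | ζ ≠ 0 ∧ h ^ 2 * ((ζ.1 : ℝ) ^ 2 + (ζ.2 : ℝ) ^ 2) ≤ R ^ 2},
      (1 / (latticeR (ζ.1 ^ 2 + ζ.2 ^ 2).toNat : ℝ)) *
        ∑ ζ' ∈ latticeCircle (ζ.1 ^ 2 + ζ.2 ^ 2).toNat,
          g (h * (ζ.1 : ℝ), h * (ζ.2 : ℝ)) (latticeTheta ζ' - latticeTheta ζ)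

section

namespace LatCons

lemma mem_circle {n : ℕ} {u : ℤ × ℤ} : u ∈ latticeCircle n ↔ u.1 ^ 2 + u.2 ^ 2 = (n : ℤ) := by
  unfold latticeCircle
  simp only [Finset.mem_filter, Finset.mem_product, Finset.mem_Icc, and_iff_right_iff_imp]
  intro h
  refine ⟨⟨?_, ?_⟩, ?_, ?_⟩ <;>
  nlinarith [Int.le_self_sq u.1, Int.le_self_sq (-u.1), Int.le_self_sq u.2, Int.le_self_sq (-u.2),
    sq_nonneg u.1, sq_nonneg u.2]

/-- complex number attached to a lattice point -/
noncomputable def zc (u : ℤ × ℤ) : ℂ := (u.1 : ℂ) + (u.2 : ℂ) * Complex.I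

/-- Gaussian multiplication -/
def gmul (v u : ℤ × ℤ) : ℤ × ℤ := (v.1 * u.1 - v.2 * u.2, v.1 * u.2 + v.2 * u.1)

/-- angular character -/
noncomputable def chi (k : ℤ) (u : ℤ × ℤ) : ℂ :=
  Complex.exp ((k : ℂ) * (latticeTheta u : ℂ) * Complex.I)

lemma latticeS_eq (m : ℕ) (k : ℤ) : latticeS m k = ∑ u ∈ latticeCircle m, chi k u := rfl

lemma zc_gmul (v u : ℤ × ℤ) : zc (gmul v u) = zc v * zc u := by
  simp only [zc, gmul]; push_cast
  linear_combination (-(v.2 : ℂ) * u.2) * Complex.I_sq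

lemma zc_re (u : ℤ × ℤ) : (zc u).re = u.1 := by simp [zc]
lemma zc_im (u : ℤ × ℤ) : (zc u).im = u.2 := by simp [zc]

lemma zc_ne {u : ℤ × ℤ} (h : u ≠ 0) : zc u ≠ 0 := by
  intro h0
  apply h
  have h1 := zc_re u
  have h2 := zc_im u
  rw [h0] at h1 h2
  simp only [Complex.zero_re, Complex.zero_im] at h1 h2
  ext
  · exact_mod_cast h1.symm
  · exact_mod_cast h2.symm

lemma exp_theta (u : ℤ × ℤ) : Complex.exp ((latticeTheta u : ℂ) * Complex.I)
    = Complex.exp ((Complex.arg (zc u) : ℂ) * Complex.I) := by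
  unfold latticeTheta
  change Complex.exp (((if 0 ≤ Complex.arg (zc u) then Complex.arg (zc u) else
    Complex.arg (zc u) + 2 * Real.pi : ℝ) : ℂ) * Complex.I) = _
  split_ifs with h
  · rfl
  · push_cast
    rw [add_mul, Complex.exp_add, Complex.exp_two_pi_mul_I, mul_one]

lemma chi_eq {u : ℤ × ℤ} (h : u ≠ 0) (k : ℤ) : chi k u = (zc u / (‖zc u‖ : ℂ)) ^ k := by
  unfold chi
  rw [mul_assoc, Complex.exp_int_mul, exp_theta]
  congr 1
  have h0 : (‖zc u‖ : ℂ) ≠ 0 := by simpa using zc_ne h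
  rw [eq_div_iff h0, mul_comm, Complex.norm_mul_exp_arg_mul_I]

lemma chi_norm (k : ℤ) (u : ℤ × ℤ) : ‖chi k u‖ = 1 := by
  unfold chi
  have : (k : ℂ) * (latticeTheta u : ℂ) * Complex.I = ((k * latticeTheta u : ℝ) : ℂ) * Complex.I := by
    push_cast; ring
  rw [this, Complex.norm_exp_ofReal_mul_I]

lemma gmul_ne {u v : ℤ × ℤ} (hv : v ≠ 0) (hu : u ≠ 0) : gmul v u ≠ 0 := by
  intro h
  have := zc_gmul v u
  rw [h] at this
  have h2 := mul_ne_zero (zc_ne hv) (zc_ne hu)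
  rw [← this] at h2
  simp [zc] at h2

lemma chi_gmul {u v : ℤ × ℤ} (hv : v ≠ 0) (hu : u ≠ 0) (k : ℤ) :
    chi k (gmul v u) = chi k v * chi k u := by
  rw [chi_eq (gmul_ne hv hu), chi_eq hv, chi_eq hu, zc_gmul, norm_mul, ← mul_zpow]
  congr 1
  push_cast
  rw [mul_div_mul_comm]

lemma gmul_inj {v : ℤ × ℤ} (hv : v ≠ 0) : Function.Injective (gmul v) := by
  intro a b hab
  have h1 : zc v * zc a = zc v * zc b := by rw [← zc_gmul, ← zc_gmul, hab]
  have h2 := mul_left_cancel₀ (zc_ne hv) h1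
  have h3 := zc_re a
  have h4 := zc_im a
  rw [h2, zc_re] at h3
  rw [h2, zc_im] at h4
  ext
  · exact_mod_cast h3.symm
  · exact_mod_cast h4.symm

lemma circle_ne {m : ℕ} (hm : 0 < m) {u : ℤ × ℤ} (hu : u ∈ latticeCircle m) : u ≠ 0 := by
  rintro rfl
  rw [mem_circle] at hu
  simp at hu
  omega

lemma sum_image {v : ℤ × ℤ} (hv : v ≠ 0) {m : ℕ} (hm : 0 < m) (k : ℤ) :
    ∑ u ∈ (latticeCircle m).image (gmul v), chi k u = chi k v * latticeS m k := by
  rw [Finset.sum_image (fun a _ b _ h => gmul_inj hv h), latticeS_eq, Finset.mul_sum]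
  exact Finset.sum_congr rfl fun u hu => chi_gmul hv (circle_ne hm hu) k

lemma chi_int {a : ℤ} (ha : 0 < a) (k : ℤ) : chi k (a, 0) = 1 := by
  have : ((a, 0) : ℤ × ℤ) ≠ 0 := by simp [Prod.ext_iff]; omega
  rw [chi_eq this]
  have h1 : zc (a, 0) = ((a : ℝ) : ℂ) := by simp [zc]
  have h2 : (0 : ℝ) < a := by exact_mod_cast ha
  rw [h1, Complex.norm_real, Real.norm_of_nonneg h2.le, div_self, one_zpow]
  exact_mod_cast h2.ne'

lemma chi_conj_add {a b : ℤ} (h : ((a, b) : ℤ × ℤ) ≠ 0) (k : ℤ) :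
    chi k (a, b) + chi k (a, -b) = 2 * (Real.cos (k * latticeTheta (a, b)) : ℂ) := by
  have h' : ((a, -b) : ℤ × ℤ) ≠ 0 := by simpa [Prod.ext_iff] using h
  have h1 : chi k (a, -b) = (starRingEnd ℂ) (chi k (a, b)) := by
    rw [chi_eq h', chi_eq h]
    have : zc (a, -b) = (starRingEnd ℂ) (zc (a, b)) := by simp [zc]
    rw [this, RCLike.norm_conj, map_zpow₀, map_div₀, Complex.conj_ofReal]
  rw [h1, Complex.add_conj]
  unfold chi
  have : (k : ℂ) * (latticeTheta (a,b) : ℂ) * Complex.I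
    = ((k * latticeTheta (a,b) : ℝ) : ℂ) * Complex.I := by
    push_cast; ring
  rw [this, Complex.exp_ofReal_mul_I_re]
  push_cast; rfl

/-- local recurrence at a prime -/
def Rec (f : ℕ → ℂ) (p : ℕ) (a b : ℂ) : Prop :=
  (∀ m, 0 < m → ¬ p ∣ m → f (p * m) = a * f m) ∧
  (∀ m, 0 < m → f (p * (p * m)) = a * f (p * m) - b * f m)

lemma circle_pos {m : ℕ} {v : ℤ × ℤ} (n : ℕ) (hv : v.1 ^ 2 + v.2 ^ 2 = n) {u : ℤ × ℤ}
    (hu : u ∈ latticeCircle m) : gmul v u ∈ latticeCircle (n * m) := by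
  rw [mem_circle] at *
  push_cast
  rw [← hu, ← hv]
  simp only [gmul]; ring

section split

lemma split_dvd {p : ℕ} (hp : p.Prime) (a b : ℤ) (hab : a ^ 2 + b ^ 2 = p)
    {m : ℕ} {u : ℤ × ℤ} (hu : u ∈ latticeCircle (p * m))
    (h : (p : ℤ) ∣ a * u.1 + b * u.2) : u ∈ (latticeCircle m).image (gmul (a, b)) := by
  have hpp : Prime (p : ℤ) := Nat.prime_iff_prime_int.mp hp
  rw [mem_circle] at hu
  push_cast at hu
  have h2 : (p : ℤ) ∣ (a * u.2 - b * u.1) := by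
    apply hpp.dvd_of_dvd_pow (n := 2)
    have : (a * u.2 - b * u.1) ^ 2 = p * (p * m) - (a * u.1 + b * u.2) ^ 2 := by
      rw [← hu, ← hab]; ring
    rw [this]
    exact dvd_sub (dvd_mul_right _ _) (dvd_pow h two_ne_zero)
  obtain ⟨x, hx⟩ := h
  obtain ⟨y, hy⟩ := h2
  have hp0 : (p : ℤ) ≠ 0 := hpp.ne_zero
  have e1 : a * x - b * y = u.1 := by
    apply mul_left_cancel₀ hp0
    linear_combination (-a) * hx + b * hy + u.1 * hab
  have e2 : a * y + b * x = u.2 := by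
    apply mul_left_cancel₀ hp0
    linear_combination (-b) * hx - a * hy + u.2 * hab
  rw [Finset.mem_image]
  refine ⟨(x, y), ?_, ?_⟩
  · rw [mem_circle]
    apply mul_left_cancel₀ hp0
    simp only
    rw [← hu, ← e1, ← e2, ← hab]; ring
  · simp only [gmul, e1, e2]

lemma split_dvd' {p : ℕ} (_hp : p.Prime) (a b : ℤ) (hab : a ^ 2 + b ^ 2 = p)
    {m : ℕ} {u : ℤ × ℤ} (hu : u ∈ (latticeCircle m).image (gmul (a, b))) :
    (p : ℤ) ∣ a * u.1 + b * u.2 := by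
  rw [Finset.mem_image] at hu
  obtain ⟨v, _, rfl⟩ := hu
  refine ⟨v.1, ?_⟩
  simp only [gmul]; rw [← hab]; ring

lemma split_union {p : ℕ} (hp : p.Prime) (a b : ℤ) (hab : a ^ 2 + b ^ 2 = p)
    (m : ℕ) : latticeCircle (p * m) =
    (latticeCircle m).image (gmul (a, b)) ∪ (latticeCircle m).image (gmul (a, -b)) := by
  have hpp : Prime (p : ℤ) := Nat.prime_iff_prime_int.mp hp
  have hab' : a ^ 2 + (-b) ^ 2 = p := by rw [neg_sq, hab]
  ext u
  rw [Finset.mem_union]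
  constructor
  · intro hu
    have h0 := mem_circle.mp hu
    push_cast at h0
    have : (p : ℤ) ∣ (a * u.1 + b * u.2) * (a * u.1 + -b * u.2) := by
      refine ⟨a ^ 2 * m - u.2 ^ 2, ?_⟩
      linear_combination a ^ 2 * h0 - u.2 ^ 2 * hab
    rcases hpp.dvd_or_dvd this with h | h
    · exact Or.inl (split_dvd hp a b hab hu h)
    · exact Or.inr (split_dvd hp a (-b) hab' hu h)
  · rintro (h | h) <;> rw [Finset.mem_image] at h <;> obtain ⟨v, hv, rfl⟩ := h
    · exact circle_pos p hab hv
    · exact circle_pos p hab' hv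

lemma split_inter {p : ℕ} (hp : p.Prime) (a b : ℤ) (hab : a ^ 2 + b ^ 2 = p)
    (hp2 : p ≠ 2) {m : ℕ} {u : ℤ × ℤ}
    (h1 : u ∈ (latticeCircle m).image (gmul (a, b)))
    (h2 : u ∈ (latticeCircle m).image (gmul (a, -b))) :
    (p : ℤ) ∣ u.1 ∧ (p : ℤ) ∣ u.2 := by
  have hpp : Prime (p : ℤ) := Nat.prime_iff_prime_int.mp hp
  have hab' : a ^ 2 + (-b) ^ 2 = p := by rw [neg_sq, hab]
  have d1 := split_dvd' hp a b hab h1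
  have d2 := split_dvd' hp a (-b) hab' h2
  have n2 : ¬ (p : ℤ) ∣ 2 := by
    intro h
    have : p ∣ 2 := by exact_mod_cast h
    exact hp2 ((Nat.prime_dvd_prime_iff_eq hp Nat.prime_two).mp this)
  have pa : ∀ c d : ℤ, c ^ 2 + d ^ 2 = p → ¬ (p : ℤ) ∣ c := by
    rintro c d hcd ⟨e, rfl⟩
    have hd : (p : ℤ) ∣ d := by
      apply hpp.dvd_of_dvd_pow (n := 2)
      exact ⟨1 - p * e ^ 2, by linear_combination hcd⟩
    obtain ⟨f, rfl⟩ := hd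
    have h3 : (p : ℤ) * (e ^ 2 + f ^ 2) = 1 := by
      apply mul_left_cancel₀ hpp.ne_zero
      linear_combination hcd
    exact hpp.not_isUnit (IsUnit.of_mul_eq_one _ h3)
  have na := pa a b hab
  have nb := pa b a (by rw [add_comm, hab])
  have e1 : (p : ℤ) ∣ 2 * (a * u.1) := by
    have := dvd_add d1 d2
    ring_nf at this ⊢; exact this
  have e2 : (p : ℤ) ∣ 2 * (b * u.2) := by
    have := dvd_sub d1 d2
    ring_nf at this ⊢; exact this
  exact ⟨((hpp.dvd_or_dvd ((hpp.dvd_or_dvd e1).resolve_left n2)).resolve_left na),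
    ((hpp.dvd_or_dvd ((hpp.dvd_or_dvd e2).resolve_left n2)).resolve_left nb)⟩

end split

lemma both_dvd {p : ℕ} (hp : p.Prime) {m : ℕ} {u : ℤ × ℤ} (hu : u ∈ latticeCircle (p * m))
    (h : (p : ℤ) ∣ u.1 ∧ (p : ℤ) ∣ u.2) :
    ∃ n, m = p * n ∧ u ∈ (latticeCircle n).image (gmul ((p : ℤ), 0)) := by
  obtain ⟨x, y⟩ := u
  obtain ⟨⟨x, rfl⟩, ⟨y, rfl⟩⟩ := h
  rw [mem_circle] at hu
  have hp0 : (p : ℤ) ≠ 0 := by exact_mod_cast hp.ne_zero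
  push_cast at hu
  have h1 : (p : ℤ) * (x ^ 2 + y ^ 2) = m := by
    apply mul_left_cancel₀ hp0
    linear_combination hu
  refine ⟨(x ^ 2 + y ^ 2).toNat, ?_, ?_⟩
  · zify
    rw [Int.toNat_of_nonneg (by positivity)]
    exact h1.symm
  · rw [Finset.mem_image]
    refine ⟨(x, y), ?_, ?_⟩
    · rw [mem_circle, Int.toNat_of_nonneg (by positivity)]
    · simp [gmul]

lemma image_p {p : ℕ} {n : ℕ} {u : ℤ × ℤ}
    (h : u ∈ (latticeCircle n).image (gmul ((p : ℤ), 0))) : (p : ℤ) ∣ u.1 ∧ (p : ℤ) ∣ u.2 := by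
  rw [Finset.mem_image] at h
  obtain ⟨v, _, rfl⟩ := h
  simp [gmul]

lemma rec_split {p : ℕ} (hp : p.Prime) (a b : ℤ) (hab : a ^ 2 + b ^ 2 = p) (hp2 : p ≠ 2) (k : ℤ) :
    Rec (fun m => latticeS m k) p (2 * (Real.cos (k * latticeTheta (a, b)) : ℂ)) 1 := by
  have hp0 : (p : ℤ) ≠ 0 := by exact_mod_cast hp.ne_zero
  have hab' : a ^ 2 + (-b) ^ 2 = p := by rw [neg_sq, hab]
  have hv : ((a, b) : ℤ × ℤ) ≠ 0 := by
    intro h; simp only [Prod.mk_eq_zero] at h; rw [h.1, h.2] at hab; simp at hab; omega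
  have hv' : ((a, -b) : ℤ × ℤ) ≠ 0 := by simpa [Prod.ext_iff] using hv
  have main : ∀ m, 0 < m → latticeS (p * m) k +
      ∑ u ∈ (latticeCircle m).image (gmul (a, b)) ∩ (latticeCircle m).image (gmul (a, -b)), chi k u
      = 2 * (Real.cos (k * latticeTheta (a, b)) : ℂ) * latticeS m k := by
    intro m hm
    rw [latticeS_eq, split_union hp a b hab, Finset.sum_union_inter, sum_image hv hm, sum_image hv' hm,
      ← chi_conj_add hv]
    ring
  have sub : ∀ m, ∀ u ∈ (latticeCircle m).image (gmul (a, b)) ∩ (latticeCircle m).image (gmul (a, -b)),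
      ∃ n, m = p * n ∧ u ∈ (latticeCircle n).image (gmul ((p : ℤ), 0)) := by
    intro m u hu
    rw [Finset.mem_inter] at hu
    apply both_dvd hp _ (split_inter hp a b hab hp2 hu.1 hu.2)
    rw [split_union hp a b hab]
    exact Finset.mem_union_left _ hu.1
  constructor
  · intro m hm hpm
    have h := main m hm
    have he : (latticeCircle m).image (gmul (a, b)) ∩ (latticeCircle m).image (gmul (a, -b)) = ∅ := by
      rw [Finset.eq_empty_iff_forall_notMem]
      intro u hu
      obtain ⟨n, hn, _⟩ := sub m u hu
      exact hpm ⟨n, hn⟩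
    rw [he, Finset.sum_empty, add_zero] at h
    exact h
  · intro m hm
    have h := main (p * m) (Nat.mul_pos hp.pos hm)
    have he : (latticeCircle (p * m)).image (gmul (a, b)) ∩
        (latticeCircle (p * m)).image (gmul (a, -b)) = (latticeCircle m).image (gmul ((p : ℤ), 0)) := by
      ext u
      constructor
      · intro hu
        obtain ⟨n, hn, h⟩ := sub _ u hu
        rw [Nat.eq_of_mul_eq_mul_left hp.pos hn]
        exact h
      · intro hu
        have hd := image_p hu
        have hc : u ∈ latticeCircle (p * (p * m)) := by
          rw [Finset.mem_image] at hu
          obtain ⟨v, hv, rfl⟩ := hu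
          rw [← mul_assoc]
          exact circle_pos (p * p) (by push_cast; ring) hv
        rw [Finset.mem_inter]
        exact ⟨split_dvd hp a b hab hc (dvd_add (hd.1.mul_left _) (hd.2.mul_left _)),
          split_dvd hp a (-b) hab' hc (dvd_add (hd.1.mul_left _) (hd.2.mul_left _))⟩
    have hpne : (((p : ℤ), 0) : ℤ × ℤ) ≠ 0 := by simpa [Prod.ext_iff] using hp0
    rw [he, sum_image hpne hm, chi_int (by exact_mod_cast hp.pos)] at h
    simp only
    linear_combination h

lemma rec_inert {p : ℕ} (hp : p.Prime) (h3 : p % 4 = 3) (k : ℤ) :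
    Rec (fun m => latticeS m k) p 0 (-1) := by
  have := Fact.mk hp
  have hp0 : (p : ℤ) ≠ 0 := by exact_mod_cast hp.ne_zero
  have sub : ∀ m, ∀ u ∈ latticeCircle (p * m),
      ∃ n, m = p * n ∧ u ∈ (latticeCircle n).image (gmul ((p : ℤ), 0)) := by
    intro m u hu
    apply both_dvd hp hu
    rw [mem_circle] at hu
    have h1 : ((u.1 : ZMod p)) ^ 2 = - (u.2 : ZMod p) ^ 2 := by
      have := congrArg (Int.cast : ℤ → ZMod p) hu
      push_cast at this
      rw [CharP.cast_eq_zero, zero_mul] at this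
      linear_combination this
    have h2 : (u.2 : ZMod p) = 0 := by
      by_contra hne
      exact ZMod.mod_four_ne_three_of_sq_eq_neg_sq' hne h1 h3
    rw [h2] at h1
    have h1' : (u.1 : ZMod p) = 0 := by simpa using h1
    exact ⟨(ZMod.intCast_zmod_eq_zero_iff_dvd _ _).mp h1', (ZMod.intCast_zmod_eq_zero_iff_dvd _ _).mp h2⟩
  constructor
  · intro m hm hpm
    have he : latticeCircle (p * m) = ∅ := by
      rw [Finset.eq_empty_iff_forall_notMem]
      intro u hu
      obtain ⟨n, hn, _⟩ := sub m u hu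
      exact hpm ⟨n, hn⟩
    simp [latticeS_eq, he]
  · intro m hm
    have he : latticeCircle (p * (p * m)) = (latticeCircle m).image (gmul ((p : ℤ), 0)) := by
      ext u
      constructor
      · intro hu
        obtain ⟨n, hn, h⟩ := sub _ u hu
        rw [Nat.eq_of_mul_eq_mul_left hp.pos hn]
        exact h
      · intro hu
        rw [Finset.mem_image] at hu
        obtain ⟨v, hv, rfl⟩ := hu
        rw [← mul_assoc]
        exact circle_pos (p * p) (by push_cast; ring) hv
    have hpne : (((p : ℤ), 0) : ℤ × ℤ) ≠ 0 := by simpa [Prod.ext_iff] using hp0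
    simp only
    rw [latticeS_eq (p * (p * m)), he, sum_image hpne hm, chi_int (by exact_mod_cast hp.pos)]
    ring

lemma S_two {m : ℕ} (hm : 0 < m) (k : ℤ) : latticeS (2 * m) k = chi k (1, 1) * latticeS m k := by
  have he : latticeCircle (2 * m) = (latticeCircle m).image (gmul (1, 1)) := by
    ext u
    constructor
    · intro hu
      apply split_dvd Nat.prime_two 1 1 (by norm_num) hu
      rw [mem_circle] at hu
      push_cast at hu
      have h1 : (2 : ℤ) ∣ u.1 ^ 2 - u.1 := by
        have := Int.even_mul_succ_self (u.1 - 1)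
        rw [even_iff_two_dvd] at this
        ring_nf at this ⊢; exact this
      have h2 : (2 : ℤ) ∣ u.2 ^ 2 - u.2 := by
        have := Int.even_mul_succ_self (u.2 - 1)
        rw [even_iff_two_dvd] at this
        ring_nf at this ⊢; exact this
      push_cast
      omega
    · intro hu
      rw [Finset.mem_image] at hu
      obtain ⟨v, hv, rfl⟩ := hu
      exact circle_pos 2 (by norm_num) hv
  rw [latticeS_eq (2 * m), he, sum_image (by simp [Prod.ext_iff]) hm]

lemma rec_two (k : ℤ) : Rec (fun m => latticeS m k) 2 (chi k (1, 1)) 0 :=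
  ⟨fun m hm _ => S_two hm k, fun m hm => by
    simp only
    rw [S_two (by omega)]; ring⟩

/-- a chosen Gaussian prime above `p` -/
noncomputable def gp (p : ℕ) : ℤ × ℤ :=
  open Classical in
  if h : ∃ v : ℤ × ℤ, v.1 ^ 2 + v.2 ^ 2 = (p : ℤ) then h.choose else (1, 0)

/-- cosine at a split prime -/
noncomputable def cp (p : ℕ) (k : ℤ) : ℝ := Real.cos (k * latticeTheta (gp p))

noncomputable def aP (p : ℕ) (k : ℤ) : ℂ :=
  if p = 2 then chi k (1, 1) else if p % 4 = 1 then 2 * (cp p k : ℂ) else 0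

noncomputable def bP (p : ℕ) : ℂ := if p = 2 then 0 else if p % 4 = 1 then 1 else -1

lemma rec_S {p : ℕ} (hp : p.Prime) (k : ℤ) : Rec (fun m => latticeS m k) p (aP p k) (bP p) := by
  unfold aP bP
  split_ifs with h2 h1
  · subst h2; exact rec_two k
  · have := Fact.mk hp
    have hex : ∃ v : ℤ × ℤ, v.1 ^ 2 + v.2 ^ 2 = (p : ℤ) := by
      obtain ⟨a, b, h⟩ := Nat.Prime.sq_add_sq (p := p) (by omega)
      exact ⟨(a, b), by simp only; exact_mod_cast h⟩
    have hg : (gp p).1 ^ 2 + (gp p).2 ^ 2 = (p : ℤ) := by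
      unfold gp
      rw [dif_pos hex]
      exact hex.choose_spec
    exact rec_split hp _ _ hg h2 k
  · apply rec_inert hp
    have := hp.eq_two_or_odd
    omega

lemma S_zero (m : ℕ) : latticeS m 0 = (latticeR m : ℂ) := by
  simp [latticeS, latticeR]

lemma S_le (m : ℕ) (k : ℤ) : ‖latticeS m k‖ ≤ latticeR m := by
  rw [latticeS_eq]
  refine (norm_sum_le _ _).trans ?_
  simp [chi_norm, latticeR]

lemma circle_one : latticeCircle 1 = {(1, 0), (-1, 0), (0, 1), (0, -1)} := by
  unfold latticeCircle
  decide

lemma R_one : latticeR 1 = 4 := by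
  unfold latticeR
  rw [circle_one]; decide

lemma S_one (k : ℤ) : latticeS 1 (4 * k) = 4 := by
  have : ∀ u ∈ latticeCircle 1, chi (4 * k) u = 1 := by
    intro u hu
    rw [chi_eq (circle_ne one_pos hu), zpow_mul]
    rw [circle_one] at hu
    have : (zc u / (‖zc u‖ : ℂ)) ^ (4 : ℤ) = 1 := by
      have e : (4 : ℤ) = ((4 : ℕ) : ℤ) := rfl
      rw [e, zpow_natCast]
      simp only [Finset.mem_insert, Finset.mem_singleton] at hu
      rcases hu with rfl | rfl | rfl | rfl <;> simp [zc, Even.neg_pow (by decide : Even 4)]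
    rw [this, one_zpow]
  rw [latticeS_eq, Finset.sum_congr rfl this]
  have := R_one
  unfold latticeR at this
  simp [this]

lemma cp_zero (p : ℕ) : cp p 0 = 1 := by simp [cp]

end LatCons

end

section

namespace LatCons
open MeasureTheory Filter Topology

section riemann
set_option linter.unusedSectionVars false
variable {E : Type*} [NormedAddCommGroup E] [NormedSpace ℝ E] [CompleteSpace E]

lemma floor_dist {h : ℝ} (hh : 0 < h) (x : ℝ) : |h * (⌊x / h⌋ : ℝ) - x| ≤ h := by
  have h1 := Int.floor_le (x / h)
  have h2 := Int.lt_floor_add_one (x / h)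
  rw [le_div_iff₀ hh] at h1
  rw [div_lt_iff₀ hh] at h2
  rw [abs_le]
  constructor <;> nlinarith

lemma cell_iff {h : ℝ} (hh : 0 < h) (x : ℝ) (n : ℤ) :
    x ∈ Set.Ico (h * n) (h * n + h) ↔ ⌊x / h⌋ = n := by
  rw [Int.floor_eq_iff, le_div_iff₀ hh, div_lt_iff₀ hh, Set.mem_Ico]
  constructor <;> rintro ⟨h1, h2⟩ <;> constructor <;> nlinarith

/-- the unit cell at `ζ` scaled by `h` -/
def cell (h : ℝ) (ζ : ℤ × ℤ) : Set (ℝ × ℝ) :=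
  Set.Ico (h * ζ.1) (h * ζ.1 + h) ×ˢ Set.Ico (h * ζ.2) (h * ζ.2 + h)

lemma cell_meas (h : ℝ) (ζ : ℤ × ℤ) : MeasurableSet (cell h ζ) :=
  measurableSet_Ico.prod measurableSet_Ico

lemma cell_vol {h : ℝ} (hh : 0 < h) (ζ : ℤ × ℤ) :
    (volume : Measure (ℝ × ℝ)) (cell h ζ) = ENNReal.ofReal (h ^ 2) := by
  unfold cell
  rw [Measure.volume_eq_prod, Measure.prod_prod, Real.volume_Ico, Real.volume_Ico,
    add_sub_cancel_left, add_sub_cancel_left, ← ENNReal.ofReal_mul hh.le, sq]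

lemma step_eq {h : ℝ} (hh : 0 < h) (φ : ℝ × ℝ → E) (B : Finset (ℤ × ℤ))
    (hB : ∀ ζ : ℤ × ℤ, ζ ∉ B → φ (h * ζ.1, h * ζ.2) = 0) :
    (fun w : ℝ × ℝ => φ (h * (⌊w.1 / h⌋ : ℝ), h * (⌊w.2 / h⌋ : ℝ))) =
    fun w => ∑ ζ ∈ B, (cell h ζ).indicator (fun _ => φ (h * ζ.1, h * ζ.2)) w := by
  funext w
  have key : ∀ ζ : ℤ × ℤ, w ∈ cell h ζ ↔ (⌊w.1 / h⌋, ⌊w.2 / h⌋) = ζ := by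
    intro ζ
    unfold cell
    rw [Set.mem_prod, cell_iff hh, cell_iff hh, Prod.ext_iff]
  classical
  simp only [Set.indicator_apply, key]
  rw [Finset.sum_ite_eq]
  split_ifs with hm
  · rfl
  · exact hB (⌊w.1 / h⌋, ⌊w.2 / h⌋) hm

lemma step_integral {h : ℝ} (hh : 0 < h) (φ : ℝ × ℝ → E) (B : Finset (ℤ × ℤ))
    (hB : ∀ ζ : ℤ × ℤ, ζ ∉ B → φ (h * ζ.1, h * ζ.2) = 0) :
    ∫ w : ℝ × ℝ, φ (h * (⌊w.1 / h⌋ : ℝ), h * (⌊w.2 / h⌋ : ℝ)) =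
      h ^ 2 • ∑ ζ ∈ B, φ (h * ζ.1, h * ζ.2) := by
  rw [step_eq hh φ B hB, integral_finsetSum]
  · rw [Finset.smul_sum]
    refine Finset.sum_congr rfl fun ζ _ => ?_
    rw [integral_indicator_const _ (cell_meas h ζ), measureReal_def, cell_vol hh,
      ENNReal.toReal_ofReal (by positivity)]
  · intro ζ _
    rw [integrable_indicator_iff (cell_meas h ζ)]
    apply integrableOn_const
    · rw [cell_vol hh]; exact ENNReal.ofReal_ne_top
    · simp

lemma box_zero {h ρ : ℝ} (hh : 0 < h) (φ : ℝ × ℝ → E) (hρ : ∀ w, ρ < ‖w‖ → φ w = 0)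
    (ζ : ℤ × ℤ) (hζ : ζ ∉ Finset.Icc (-⌈ρ / h⌉) ⌈ρ / h⌉ ×ˢ Finset.Icc (-⌈ρ / h⌉) ⌈ρ / h⌉) :
    φ (h * ζ.1, h * ζ.2) = 0 := by
  apply hρ
  by_contra hle
  push Not at hle
  apply hζ
  have aux : ∀ n : ℤ, |h * (n : ℝ)| ≤ ρ → n ∈ Finset.Icc (-⌈ρ / h⌉) ⌈ρ / h⌉ := by
    intro n hn
    rw [abs_le] at hn
    have hc := Int.le_ceil (ρ / h)
    rw [div_le_iff₀ hh] at hc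
    rw [Finset.mem_Icc]
    constructor
    · have : (-(⌈ρ / h⌉ : ℝ)) ≤ n := by
        apply le_of_mul_le_mul_left _ hh
        nlinarith
      exact_mod_cast this
    · have : (n : ℝ) ≤ ⌈ρ / h⌉ := by
        apply le_of_mul_le_mul_left _ hh
        nlinarith
      exact_mod_cast this
  rw [Prod.norm_mk, max_le_iff] at hle
  rw [Finset.mem_product]
  exact ⟨aux _ hle.1, aux _ hle.2⟩

theorem riemann (φ : ℝ × ℝ → E) {C ρ : ℝ} (hC : ∀ w, ‖φ w‖ ≤ C) (hρ : ∀ w, ρ < ‖w‖ → φ w = 0)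
    (hcont : ∀ᵐ w, ContinuousAt φ w) :
    Tendsto (fun h : ℝ => h ^ 2 • ∑ᶠ ζ : ℤ × ℤ, φ (h * ζ.1, h * ζ.2)) (𝓝[>] 0) (𝓝 (∫ w, φ w)) := by
  have heq : (fun h : ℝ => ∫ w : ℝ × ℝ, φ (h * (⌊w.1 / h⌋ : ℝ), h * (⌊w.2 / h⌋ : ℝ))) =ᶠ[𝓝[>] 0]
      (fun h : ℝ => h ^ 2 • ∑ᶠ ζ : ℤ × ℤ, φ (h * ζ.1, h * ζ.2)) := by
    filter_upwards [self_mem_nhdsWithin] with h hh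
    have hh : 0 < h := hh
    rw [step_integral hh φ _ (box_zero hh φ hρ), finsum_eq_sum_of_support_subset]
    intro ζ hζ
    by_contra hn
    exact hζ (box_zero hh φ hρ ζ hn)
  refine Tendsto.congr' heq ?_
  have hC0 : 0 ≤ C := (norm_nonneg _).trans (hC 0)
  have hdist : ∀ h : ℝ, 0 < h → ∀ w : ℝ × ℝ,
      dist ((h * (⌊w.1 / h⌋ : ℝ), h * (⌊w.2 / h⌋ : ℝ)) : ℝ × ℝ) w ≤ h := by
    intro h hh w
    rw [Prod.dist_eq, Real.dist_eq, Real.dist_eq]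
    exact max_le (floor_dist hh _) (floor_dist hh _)
  apply tendsto_integral_filter_of_dominated_convergence
    ((Metric.closedBall (0 : ℝ × ℝ) (ρ + 1)).indicator fun _ => C)
  · filter_upwards [self_mem_nhdsWithin] with h hh
    have hh : 0 < h := hh
    rw [step_eq hh φ _ (box_zero hh φ hρ)]
    apply Finset.aestronglyMeasurable_fun_sum
    intro ζ _
    exact (aestronglyMeasurable_const).indicator (cell_meas h ζ)
  · filter_upwards [self_mem_nhdsWithin, mem_nhdsWithin_of_mem_nhds (Iic_mem_nhds one_pos)] with h hh h1
    have hh : 0 < h := hh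
    have h1 : h ≤ 1 := h1
    refine Eventually.of_forall fun w => ?_
    classical
    rw [Set.indicator_apply]
    split_ifs with hw
    · exact hC _
    · rw [hρ, norm_zero]
      rw [Metric.mem_closedBall, dist_zero_right] at hw
      push Not at hw
      have := hdist h hh w
      have h3 := norm_sub_norm_le w (h * (⌊w.1 / h⌋ : ℝ), h * (⌊w.2 / h⌋ : ℝ))
      rw [← dist_eq_norm, dist_comm] at h3
      linarith
  · rw [integrable_indicator_iff Metric.isClosed_closedBall.measurableSet]
    apply integrableOn_const
    · exact measure_closedBall_lt_top.ne
    · simp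
  · filter_upwards [hcont] with w hw
    refine hw.tendsto.comp ?_
    rw [tendsto_iff_dist_tendsto_zero]
    refine squeeze_zero' (g := fun h => h) (Eventually.of_forall fun _ => dist_nonneg) ?_ ?_
    · filter_upwards [self_mem_nhdsWithin] with h hh
      exact hdist h hh w
    · exact tendsto_nhdsWithin_of_tendsto_nhds tendsto_id

/-- closed Euclidean disc -/
def disc (R : ℝ) : Set (ℝ × ℝ) := {w | w.1 ^ 2 + w.2 ^ 2 ≤ R ^ 2}

lemma disc_closed (R : ℝ) : IsClosed (disc R) :=
  isClosed_le (by fun_prop) (by fun_prop)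

lemma disc_convex (R : ℝ) : Convex ℝ (disc R) := by
  intro x hx y hy a b ha hb hab
  simp only [disc, Set.mem_ofPred_eq, Prod.fst_add, Prod.snd_add, Prod.smul_fst, Prod.smul_snd,
    smul_eq_mul] at *
  have hb' : b = 1 - a := by linarith
  subst hb'
  nlinarith [mul_nonneg (mul_nonneg ha hb) (sq_nonneg (x.1 - y.1)),
    mul_nonneg (mul_nonneg ha hb) (sq_nonneg (x.2 - y.2))]

lemma disc_frontier (R : ℝ) : ∀ᵐ w : ℝ × ℝ, w ∉ frontier (disc R) := by
  rw [← measure_eq_zero_iff_ae_notMem]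
  exact (disc_convex R).addHaar_frontier volume

lemma disc_norm {R : ℝ} (hR : 0 ≤ R) {w : ℝ × ℝ} (hw : w ∈ disc R) : ‖w‖ ≤ R := by
  have hw : w.1 ^ 2 + w.2 ^ 2 ≤ R ^ 2 := hw
  rw [Prod.norm_def, max_le_iff]
  exact ⟨abs_le_of_sq_le_sq (by nlinarith [sq_nonneg w.2]) hR,
    abs_le_of_sq_le_sq (by nlinarith [sq_nonneg w.1]) hR⟩

lemma disc_indicator_cont {R : ℝ} {φ : ℝ × ℝ → E} (h : ∀ᵐ w, ContinuousAt φ w) :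
    ∀ᵐ w, ContinuousAt ((disc R).indicator φ) w := by
  filter_upwards [h, disc_frontier R] with w hw hf
  by_cases hi : w ∈ interior (disc R)
  · refine hw.congr ?_
    filter_upwards [mem_interior_iff_mem_nhds.mp hi] with x hx
    rw [Set.indicator_of_mem hx]
  · have hw' : w ∉ disc R := by
      intro hd
      exact hf ⟨subset_closure hd, hi⟩
    have : (disc R)ᶜ ∈ 𝓝 w := (disc_closed R).isOpen_compl.mem_nhds hw'
    refine (continuousAt_const (y := (0 : E))).congr ?_
    filter_upwards [this] with x hx
    rw [Set.indicator_of_notMem hx]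

theorem riemann_disc (φ : ℝ × ℝ → E) {C R : ℝ} (hR : 0 ≤ R) (hC : ∀ w, ‖φ w‖ ≤ C)
    (hcont : ∀ᵐ w, ContinuousAt φ w) :
    Tendsto (fun h : ℝ => h ^ 2 • ∑ᶠ ζ : ℤ × ℤ, (disc R).indicator φ (h * ζ.1, h * ζ.2)) (𝓝[>] 0)
      (𝓝 (∫ w in disc R, φ w)) := by
  rw [← integral_indicator (disc_closed R).measurableSet]
  apply riemann (C := C) (ρ := R)
  · intro w
    exact (norm_indicator_le_norm_self _ _).trans (hC w)
  · intro w hw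
    rw [Set.indicator_of_notMem]
    intro hd
    exact absurd (disc_norm hR hd) (not_le.mpr hw)
  · exact disc_indicator_cont hcont

end riemann
end LatCons

end

section

namespace LatCons
open MeasureTheory Filter Topology

/-- punctured lattice disc -/
noncomputable def pd (M : ℕ) : Finset (ℤ × ℤ) := (Finset.Icc 1 M).biUnion latticeCircle

lemma mem_pd {M : ℕ} {ζ : ℤ × ℤ} : ζ ∈ pd M ↔ ζ ≠ 0 ∧ ζ.1 ^ 2 + ζ.2 ^ 2 ≤ (M : ℤ) := by
  unfold pd
  rw [Finset.mem_biUnion]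
  constructor
  · rintro ⟨m, hm, hζ⟩
    rw [Finset.mem_Icc] at hm
    refine ⟨circle_ne (by omega) hζ, ?_⟩
    rw [mem_circle.mp hζ]
    exact_mod_cast hm.2
  · rintro ⟨h0, h⟩
    have hn : 0 ≤ ζ.1 ^ 2 + ζ.2 ^ 2 := by positivity
    refine ⟨(ζ.1 ^ 2 + ζ.2 ^ 2).toNat, ?_, ?_⟩
    · rw [Finset.mem_Icc]
      refine ⟨?_, by omega⟩
      by_contra hlt
      apply h0
      have h1 : ζ.1 ^ 2 + ζ.2 ^ 2 = 0 := by omega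
      have h2 : ζ.1 = 0 := by nlinarith [sq_nonneg ζ.1, sq_nonneg ζ.2]
      have h3 : ζ.2 = 0 := by nlinarith [sq_nonneg ζ.1, sq_nonneg ζ.2]
      exact Prod.ext h2 h3
    · rw [mem_circle, Int.toNat_of_nonneg hn]

lemma sum_pd {E : Type*} [AddCommMonoid E] (F : ℤ × ℤ → E) (M : ℕ) :
    ∑ ζ ∈ pd M, F ζ = ∑ m ∈ Finset.Icc 1 M, ∑ ζ ∈ latticeCircle m, F ζ := by
  unfold pd
  apply Finset.sum_biUnion
  intro a _ b _ hab
  rw [Function.onFun, Finset.disjoint_left]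
  intro u hu hv
  rw [mem_circle] at hu hv
  exact hab (by exact_mod_cast hu.symm.trans hv)

/-- angular character on the plane -/
noncomputable def Phi (k : ℤ) (w : ℝ × ℝ) : ℂ :=
  (((w.1 : ℂ) + (w.2 : ℂ) * Complex.I) / (‖(w.1 : ℂ) + (w.2 : ℂ) * Complex.I‖ : ℂ)) ^ k

lemma plane_ne {w : ℝ × ℝ} (hw : w ≠ 0) : (w.1 : ℂ) + (w.2 : ℂ) * Complex.I ≠ 0 := by
  intro h
  apply hw
  have h1 := congrArg Complex.re h
  have h2 := congrArg Complex.im h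
  simp at h1 h2
  exact Prod.ext h1 h2

lemma Phi_norm (k : ℤ) (w : ℝ × ℝ) : ‖Phi k w‖ ≤ 1 := by
  unfold Phi
  rw [norm_zpow, norm_div, Complex.norm_real, norm_norm]
  by_cases h : ‖(w.1 : ℂ) + (w.2 : ℂ) * Complex.I‖ = 0
  · rw [h, div_zero]
    by_cases hk : k = 0
    · simp [hk]
    · rw [zero_zpow _ hk]; exact zero_le_one
  · rw [div_self h, one_zpow]

lemma Phi_cont (k : ℤ) : ∀ᵐ w : ℝ × ℝ, ContinuousAt (Phi k) w := by
  have : ∀ᵐ w : ℝ × ℝ, w ≠ 0 := Measure.ae_ne volume 0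
  filter_upwards [this] with w hw
  have h := plane_ne hw
  unfold Phi
  refine ContinuousAt.zpow₀ ?_ k (Or.inl ?_)
  · refine ContinuousAt.div (by fun_prop) (by fun_prop) ?_
    simpa using h
  · exact div_ne_zero h (by simpa using h)

lemma Phi_chi (k : ℤ) {h : ℝ} (hh : 0 < h) {ζ : ℤ × ℤ} (hζ : ζ ≠ 0) :
    Phi k (h * ζ.1, h * ζ.2) = chi k ζ := by
  rw [chi_eq hζ]
  unfold Phi
  have : ((h * (ζ.1 : ℝ) : ℝ) : ℂ) + ((h * (ζ.2 : ℝ) : ℝ) : ℂ) * Complex.I = (h : ℂ) * zc ζ := by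
    unfold zc; push_cast; ring
  simp only
  rw [this, norm_mul, Complex.norm_real, Real.norm_of_nonneg hh.le]
  push_cast
  rw [mul_div_mul_left]
  exact_mod_cast hh.ne'

lemma finsum_disc {E : Type*} [AddCommGroup E] (φ : ℝ × ℝ → E) {h R : ℝ} (hh : 0 < h)
    (M : ℕ) (hM : ∀ n : ℤ, h ^ 2 * (n : ℝ) ≤ R ^ 2 ↔ n ≤ M) :
    ∑ᶠ ζ : ℤ × ℤ, (disc R).indicator φ (h * ζ.1, h * ζ.2) =
      φ 0 + ∑ ζ ∈ pd M, φ (h * ζ.1, h * ζ.2) := by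
  classical
  have key : ∀ ζ : ℤ × ℤ, ((h * ζ.1, h * ζ.2) : ℝ × ℝ) ∈ disc R ↔ ζ ∈ insert 0 (pd M) := by
    intro ζ
    have h1 := hM (ζ.1 ^ 2 + ζ.2 ^ 2)
    have h2 : ((h * ζ.1, h * ζ.2) : ℝ × ℝ) ∈ disc R ↔
        h ^ 2 * ((ζ.1 ^ 2 + ζ.2 ^ 2 : ℤ) : ℝ) ≤ R ^ 2 := by
      unfold disc
      rw [Set.mem_ofPred_eq]
      push_cast
      ring_nf
    rw [h2, h1, Finset.mem_insert, mem_pd]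
    by_cases h0 : ζ = 0
    · simp [h0]
    · simp [h0]
  have h3 : (fun ζ : ℤ × ℤ => (disc R).indicator φ (h * ζ.1, h * ζ.2)) =
      fun ζ => if ζ ∈ insert 0 (pd M) then φ (h * ζ.1, h * ζ.2) else 0 := by
    funext ζ
    rw [Set.indicator_apply]
    simp only [key]
  rw [h3, finsum_eq_sum_of_support_subset (s := insert 0 (pd M))]
  · rw [Finset.sum_congr rfl (g := fun ζ : ℤ × ℤ => φ (h * ζ.1, h * ζ.2))]
    · rw [Finset.sum_insert]
      · congr 1
        simp [Prod.mk_zero_zero]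
      · rw [mem_pd]; simp
    · intro ζ hζ
      rw [if_pos hζ]
  · intro ζ hζ
    by_contra hn
    apply hζ
    exact if_neg (by exact_mod_cast hn)

lemma avg_S (k : ℤ) : Tendsto (fun n : ℕ => (∑ m ∈ Finset.Icc 1 n, latticeS m k) / (n : ℂ)) atTop
    (𝓝 (∫ w in disc 1, Phi k w)) := by
  have h1 := riemann_disc (Phi k) (C := 1) (R := 1) zero_le_one (Phi_norm k) (Phi_cont k)
  have h2 : Tendsto (fun n : ℕ => 1 / Real.sqrt n) atTop (𝓝[>] 0) := by
    rw [tendsto_nhdsWithin_iff]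
    constructor
    · simp only [one_div]
      exact tendsto_inv_atTop_zero.comp (Real.tendsto_sqrt_atTop.comp tendsto_natCast_atTop_atTop)
    · filter_upwards [eventually_gt_atTop 0] with n hn
      have : (0 : ℝ) < n := by exact_mod_cast hn
      exact one_div_pos.mpr (Real.sqrt_pos.mpr this)
  have h3 := h1.comp h2
  have h4 : Tendsto (fun n : ℕ => Phi k 0 / (n : ℂ)) atTop (𝓝 0) :=
    tendsto_const_div_atTop_nhds_zero_nat _
  have h5 := h3.sub h4
  rw [sub_zero] at h5
  refine h5.congr' ?_
  filter_upwards [eventually_gt_atTop 0] with n hn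
  have hn0 : (0 : ℝ) < n := by exact_mod_cast hn
  have hs : 0 < 1 / Real.sqrt n := one_div_pos.mpr (Real.sqrt_pos.mpr hn0)
  have hsq : (1 / Real.sqrt n) ^ 2 = 1 / n := by
    rw [div_pow, Real.sq_sqrt hn0.le, one_pow]
  simp only [Function.comp]
  rw [finsum_disc (Phi k) hs n, sum_pd, hsq]
  · rw [Finset.sum_congr rfl (g := fun m => latticeS m k)]
    · rw [Complex.real_smul]
      push_cast
      ring
    · intro m hm
      rw [latticeS_eq]
      refine Finset.sum_congr rfl fun ζ hζ => Phi_chi k hs (circle_ne ?_ hζ)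
      rw [Finset.mem_Icc] at hm; omega
  · intro j
    rw [hsq, one_pow, one_div, inv_mul_le_iff₀ hn0, mul_one]
    exact_mod_cast Iff.rfl

lemma Phi_integral_zero {k : ℤ} (hk : k ≠ 0) : ∫ w in disc 1, Phi k w = 0 := by
  rw [← integral_indicator (disc_closed 1).measurableSet]
  have e1 := Complex.volume_preserving_equiv_real_prod.integral_comp
    Complex.measurableEquivRealProd.measurableEmbedding ((disc 1).indicator (Phi k))
  rw [← e1]
  set G : ℂ → ℂ := fun z => (disc 1).indicator (Phi k) (Complex.measurableEquivRealProd z) with hG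
  have hGz : ∀ z : ℂ, G z = if ‖z‖ ≤ 1 then (z / (‖z‖ : ℂ)) ^ k else 0 := by
    intro z
    classical
    have : Complex.measurableEquivRealProd z = (z.re, z.im) := rfl
    simp only [hG, this, Set.indicator_apply]
    have hm : ((z.re, z.im) : ℝ × ℝ) ∈ disc 1 ↔ ‖z‖ ≤ 1 := by
      unfold disc
      rw [Set.mem_ofPred_eq, one_pow, ← sq_le_one_iff₀ (norm_nonneg z), Complex.sq_norm,
        Complex.normSq_apply]
      ring_nf
    simp only [hm, Phi, Complex.re_add_im]
  set θ : ℝ := Real.pi / k with hθ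
  set c : Circle := Circle.exp θ with hc
  have hck : (c : ℂ) ^ k = -1 := by
    rw [hc, Circle.coe_exp, ← Complex.exp_int_mul, hθ]
    have hk' : (k : ℂ) ≠ 0 := by exact_mod_cast hk
    push_cast
    rw [show (k : ℂ) * (Real.pi / k * Complex.I) = Real.pi * Complex.I by field_simp]
    exact Complex.exp_pi_mul_I
  have e2 := (rotation c).measurePreserving.integral_comp
    (rotation c).toHomeomorph.measurableEmbedding G
  have e3 : ∀ z, G (rotation c z) = - G z := by
    intro z
    rw [hGz, hGz, rotation_apply, norm_mul, Circle.norm_coe, one_mul, mul_div_assoc, mul_zpow, hck]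
    split_ifs <;> simp
  simp only [e3] at e2
  rw [integral_neg] at e2
  exact self_eq_neg.mp e2.symm

/-- the mean of `r` -/
noncomputable def mu0 : ℝ := (volume : Measure (ℝ × ℝ)).real (disc 1)

lemma disc_finite (R : ℝ) : (volume : Measure (ℝ × ℝ)) (disc R) < ⊤ := by
  refine lt_of_le_of_lt (measure_mono (t := Metric.closedBall 0 |R|) ?_) measure_closedBall_lt_top
  intro w hw
  rw [Metric.mem_closedBall, dist_zero_right]
  apply disc_norm (abs_nonneg R)
  unfold disc at *
  rw [Set.mem_ofPred_eq] at *
  rwa [sq_abs]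

lemma mu0_pos : 0 < mu0 := by
  unfold mu0
  rw [measureReal_def]
  refine ENNReal.toReal_pos ?_ (disc_finite 1).ne
  have hsub : Metric.ball (0 : ℝ × ℝ) (1 / 2) ⊆ disc 1 := by
    intro w hw
    rw [Metric.mem_ball, dist_zero_right, Prod.norm_def, max_lt_iff, Real.norm_eq_abs,
      Real.norm_eq_abs, abs_lt, abs_lt] at hw
    unfold disc
    rw [Set.mem_ofPred_eq]
    nlinarith
  exact ne_of_gt ((Metric.measure_ball_pos _ _ (by norm_num)).trans_le (measure_mono hsub))

lemma avg_R : Tendsto (fun n : ℕ => (∑ m ∈ Finset.Icc 1 n, (latticeR m : ℝ)) / (n : ℝ)) atTop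
    (𝓝 mu0) := by
  have h := avg_S 0
  have e : ∫ w in disc 1, Phi 0 w = (mu0 : ℂ) := by
    have : Phi 0 = fun _ => 1 := by funext w; simp [Phi]
    rw [this, setIntegral_const, mu0]
    simp
  rw [e] at h
  have h2 := (Complex.continuous_re.tendsto _).comp h
  rw [Complex.ofReal_re] at h2
  refine h2.congr fun n => ?_
  simp only [Function.comp, S_zero]
  rw [← Complex.ofReal_re ((∑ m ∈ Finset.Icc 1 n, (latticeR m : ℝ)) / (n : ℝ))]
  push_cast
  rfl

lemma sum_R_bigO : (fun n : ℕ => ∑ m ∈ Finset.Icc 1 n, (latticeR m : ℝ)) =O[atTop]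
    fun n => (n : ℝ) ^ (1 : ℝ) := by
  apply Asymptotics.isBigO_atTop_natCast_rpow_of_tendsto_div_rpow (𝕜 := ℝ) (a := mu0)
  simpa using avg_R

lemma S_summable (k : ℤ) {s : ℝ} (hs : 1 < s) : LSeriesSummable (fun m => latticeS m k) s := by
  refine LSeriesSummable_of_sum_norm_bigO (r := 1) ?_ zero_le_one (by simpa using hs)
  refine Asymptotics.IsBigO.trans (Asymptotics.isBigO_of_le _ fun n => ?_) sum_R_bigO
  rw [Real.norm_of_nonneg (by positivity), Real.norm_of_nonneg (by positivity)]
  exact Finset.sum_le_sum fun m _ => S_le m k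

lemma LS_zero {k : ℤ} (hk : k ≠ 0) : Tendsto (fun s : ℝ => (s - 1) * LSeries (fun m => latticeS m k) s)
    (𝓝[>] 1) (𝓝 0) := by
  apply LSeries_tendsto_sub_mul_nhds_one_of_tendsto_sum_div
  · have := avg_S k
    rwa [Phi_integral_zero hk] at this
  · intro s hs
    exact S_summable k hs

lemma LR_mu : Tendsto (fun s : ℝ => (s - 1) * LSeries (fun m => latticeS m 0) s)
    (𝓝[>] 1) (𝓝 (mu0 : ℂ)) := by
  have := LSeries_tendsto_sub_mul_nhds_one_of_tendsto_sum_div_and_nonneg (fun m => (latticeR m : ℝ))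
    avg_R (fun n => by positivity)
  simpa [S_zero] using this

end LatCons

end

section

namespace LatCons
open MeasureTheory Filter Topology

/-- dilation by `p` -/
def dil (p : ℕ) (F : ℕ → ℂ) (m : ℕ) : ℂ := if p ∣ m then F (m / p) else 0

lemma dil_mul {p : ℕ} (hp : 0 < p) (F : ℕ → ℂ) (n : ℕ) : dil p F (p * n) = F n := by
  unfold dil
  rw [if_pos (dvd_mul_right _ _), Nat.mul_div_cancel_left _ hp]

lemma dil_not {p : ℕ} (F : ℕ → ℂ) {n : ℕ} (h : ¬ p ∣ n) : dil p F n = 0 := if_neg h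

lemma hasSum_dil {p : ℕ} (hp : 0 < p) {F : ℕ → ℂ} {L : ℂ} (h : HasSum F L) : HasSum (dil p F) L := by
  have hinj : Function.Injective (fun n : ℕ => p * n) := fun a b hab => Nat.eq_of_mul_eq_mul_left hp hab
  rw [← hinj.hasSum_iff]
  · have : dil p F ∘ (fun n : ℕ => p * n) = F := by
      funext n; exact dil_mul hp F n
    rwa [this]
  · intro m hm
    apply dil_not
    rintro ⟨n, rfl⟩
    exact hm ⟨n, rfl⟩

lemma elim_prime {f : ℕ → ℂ} {p : ℕ} (hp : p.Prime) {a b : ℂ} (hr : Rec f p a b) {s : ℂ}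
    (hs : LSeriesSummable f s) :
    LSeries (fun m => if p ∣ m then 0 else f m) s =
      LSeries f s * (1 - a * (p : ℂ) ^ (-s) + b * ((p : ℂ) ^ (-s)) ^ 2) := by
  have hp0 : (p : ℂ) ≠ 0 := by exact_mod_cast hp.ne_zero
  set x : ℂ := (p : ℂ) ^ (-s) with hx
  have h0 : HasSum (LSeries.term f s) (LSeries f s) := hs.hasSum
  have h1 := hasSum_dil hp.pos h0
  have h2 := hasSum_dil hp.pos h1
  have h3 := (h0.sub (h1.mul_left (a * x))).add (h2.mul_left (b * x ^ 2))
  have tp : ∀ n, 0 < n → LSeries.term f s (p * n) = f (p * n) * (x * (n : ℂ) ^ (-s)) := by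
    intro n hn
    rw [LSeries.term_of_ne_zero (Nat.mul_pos hp.pos hn).ne', div_eq_mul_inv, ← Complex.cpow_neg]
    push_cast
    rw [Complex.natCast_mul_natCast_cpow]
  have t1 : ∀ n, 0 < n → LSeries.term f s n = f n * (n : ℂ) ^ (-s) := by
    intro n hn
    rw [LSeries.term_of_ne_zero hn.ne', div_eq_mul_inv, ← Complex.cpow_neg]
  have heq : LSeries.term (fun m => if p ∣ m then 0 else f m) s = fun m =>
      LSeries.term f s m - a * x * dil p (LSeries.term f s) m
        + b * x ^ 2 * dil p (dil p (LSeries.term f s)) m := by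
    funext m
    rcases Nat.eq_zero_or_pos m with rfl | hm
    · simp [dil]
    rw [LSeries.term_of_ne_zero hm.ne']
    by_cases hd : p ∣ m
    · obtain ⟨n, rfl⟩ := hd
      have hn : 0 < n := Nat.pos_of_mul_pos_left hm
      rw [if_pos (dvd_mul_right _ _), zero_div, dil_mul hp.pos, dil_mul hp.pos, tp n hn]
      by_cases hd2 : p ∣ n
      · obtain ⟨l, rfl⟩ := hd2
        have hl : 0 < l := Nat.pos_of_mul_pos_left hn
        rw [dil_mul hp.pos, tp l hl, t1 l hl, hr.2 l hl]
        push_cast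
        rw [Complex.natCast_mul_natCast_cpow]
        ring
      · rw [dil_not _ hd2, t1 n hn, hr.1 n hn hd2]
        ring
    · rw [if_neg hd, dil_not _ hd, dil_not _ hd, LSeries.term_of_ne_zero hm.ne']
      ring
  have h4 : HasSum (LSeries.term (fun m => if p ∣ m then 0 else f m) s)
      (LSeries f s - a * x * LSeries f s + b * x ^ 2 * LSeries f s) := by
    rw [heq]; exact h3
  rw [LSeries, h4.tsum_eq]
  ring

lemma Rec.mul {f : ℕ → ℂ} {p : ℕ} {a b : ℂ} (h : Rec f p a b) {u : ℕ → ℂ}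
    (hu : ∀ m, 0 < m → u (p * m) = u m) (hp : 0 < p) : Rec (fun m => u m * f m) p a b := by
  constructor
  · intro m hm hd
    simp only
    rw [h.1 m hm hd, hu m hm]; ring
  · intro m hm
    simp only
    rw [h.2 m hm, hu _ (Nat.mul_pos hp hm), hu m hm]; ring

open Classical in
/-- indicator of no prime factor below `N` -/
noncomputable def svu (N m : ℕ) : ℂ :=
  if ∃ q, q.Prime ∧ q < N ∧ q ∣ m then 0 else 1

lemma svu_mul {N m : ℕ} (hN : N.Prime) : svu N (N * m) = svu N m := by
  unfold svu
  classical
  refine if_congr ?_ rfl rfl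
  constructor
  · rintro ⟨q, hq, hlt, hd⟩
    refine ⟨q, hq, hlt, ((hq.dvd_mul).mp hd).resolve_left ?_⟩
    intro h
    exact hlt.ne ((Nat.prime_dvd_prime_iff_eq hq hN).mp h)
  · rintro ⟨q, hq, hlt, hd⟩
    exact ⟨q, hq, hlt, hd.mul_left _⟩

lemma svu_succ_prime {N : ℕ} (hN : N.Prime) (m : ℕ) :
    svu (N + 1) m = if N ∣ m then 0 else svu N m := by
  unfold svu
  by_cases h : N ∣ m
  · rw [if_pos h, if_pos ⟨N, hN, Nat.lt_succ_self N, h⟩]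
  · rw [if_neg h]
    classical
    refine if_congr ?_ rfl rfl
    constructor
    · rintro ⟨q, hq, hlt, hd⟩
      refine ⟨q, hq, ?_, hd⟩
      rcases Nat.lt_succ_iff_lt_or_eq.mp hlt with h1 | rfl
      · exact h1
      · exact absurd hd h
    · rintro ⟨q, hq, hlt, hd⟩
      exact ⟨q, hq, by omega, hd⟩

lemma svu_succ_not {N : ℕ} (hN : ¬ N.Prime) (m : ℕ) : svu (N + 1) m = svu N m := by
  unfold svu
  classical
  refine if_congr ?_ rfl rfl
  constructor
  · rintro ⟨q, hq, hlt, hd⟩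
    refine ⟨q, hq, ?_, hd⟩
    rcases Nat.lt_succ_iff_lt_or_eq.mp hlt with h1 | rfl
    · exact h1
    · exact absurd hq hN
  · rintro ⟨q, hq, hlt, hd⟩
    exact ⟨q, hq, by omega, hd⟩

lemma svu_norm (N m : ℕ) : ‖svu N m‖ ≤ 1 := by
  unfold svu
  split_ifs <;> simp

lemma term_svu_norm (f : ℕ → ℂ) (s : ℂ) (N m : ℕ) :
    ‖LSeries.term (fun m => svu N m * f m) s m‖ ≤ ‖LSeries.term f s m‖ := by
  rcases Nat.eq_zero_or_pos m with rfl | hm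
  · simp
  rw [LSeries.term_of_ne_zero hm.ne', LSeries.term_of_ne_zero hm.ne', norm_div, norm_div, norm_mul]
  gcongr
  exact mul_le_of_le_one_left (norm_nonneg _) (svu_norm N m)

lemma svu_summable {f : ℕ → ℂ} {s : ℂ} (hs : LSeriesSummable f s) (N : ℕ) :
    LSeriesSummable (fun m => svu N m * f m) s :=
  Summable.of_norm_bounded hs.norm (term_svu_norm f s N)

/-- local Euler factor -/
noncomputable def EF (p : ℕ) (k : ℤ) (s : ℂ) : ℂ :=
  1 - aP p k * (p : ℂ) ^ (-s) + bP p * ((p : ℂ) ^ (-s)) ^ 2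

lemma sieve_prod (k : ℤ) {s : ℝ} (hs : 1 < s) (N : ℕ) :
    LSeries (fun m => svu N m * latticeS m k) s =
      LSeries (fun m => latticeS m k) s * ∏ p ∈ Finset.range N with p.Prime, EF p k s := by
  induction N with
  | zero =>
    simp [svu]
  | succ N ih =>
    rw [Finset.range_add_one, Finset.filter_insert]
    split_ifs with hN
    · rw [Finset.prod_insert (by simp)]
      have h1 : Rec (fun m => svu N m * latticeS m k) N (aP N k) (bP N) :=
        (rec_S hN k).mul (fun m _ => svu_mul hN) hN.pos
      have h2 := elim_prime hN h1 (svu_summable (S_summable k hs) N)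
      have h3 : (fun m => svu (N + 1) m * latticeS m k) =
          fun m => if N ∣ m then 0 else svu N m * latticeS m k := by
        funext m
        rw [svu_succ_prime hN]
        split_ifs <;> simp
      rw [h3, h2, ih, EF]
      ring
    · rw [← ih]
      simp only [svu_succ_not hN]

lemma sieve_lim {f : ℕ → ℂ} {s : ℂ} (hs : LSeriesSummable f s) :
    Tendsto (fun N => LSeries (fun m => svu N m * f m) s) atTop (𝓝 (f 1)) := by
  have hlim : f 1 = ∑' m : ℕ, (if m = 1 then f 1 else 0) := by
    rw [tsum_ite_eq]
  rw [hlim]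
  unfold LSeries
  refine tendsto_tsum_of_dominated_convergence hs.norm ?_
    (Eventually.of_forall fun N m => term_svu_norm f s N m)
  intro m
  refine tendsto_const_nhds.congr' ?_
  filter_upwards [eventually_gt_atTop m] with N hN
  rcases Nat.eq_zero_or_pos m with rfl | hm
  · simp
  rw [LSeries.term_of_ne_zero hm.ne']
  split_ifs with h1
  · subst h1
    have : svu N 1 = 1 := by
      unfold svu
      rw [if_neg]
      rintro ⟨q, hq, _, hd⟩
      exact hq.one_lt.ne' (Nat.dvd_one.mp hd)
    simp [this]
  · have : svu N m = 0 := by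
      unfold svu
      rw [if_pos]
      exact ⟨m.minFac, Nat.minFac_prime h1, lt_of_le_of_lt (Nat.minFac_le hm) hN, Nat.minFac_dvd m⟩
    simp [this]

/-- defect at a split prime -/
noncomputable def dP (k : ℤ) (p : ℕ) : ℝ := if p.Prime ∧ p % 4 = 1 then (1 - cp p k) / p else 0

lemma dP_nonneg (k : ℤ) (p : ℕ) : 0 ≤ dP k p := by
  unfold dP
  split_ifs
  · have : cp p k ≤ 1 := Real.cos_le_one _
    exact div_nonneg (by linarith) (by positivity)
  · exact le_rfl

lemma EF_le {p : ℕ} (hp : p.Prime) (k : ℤ) {s : ℝ} (hs : 1 < s) :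
    ‖EF p k s‖ ≤ ‖EF p 0 s‖ * Real.exp ((if p = 2 then 2 else 0) + 8 * dP k p) := by
  have hp1 : (1 : ℝ) < p := by exact_mod_cast hp.one_lt
  have hp2 : (2 : ℝ) ≤ p := by exact_mod_cast hp.two_le
  have hp0 : (0 : ℝ) < p := by linarith
  set x : ℝ := (p : ℝ) ^ (-s) with hx
  have hxc : (p : ℂ) ^ (-(s : ℂ)) = (x : ℂ) := by
    rw [hx, Complex.ofReal_cpow hp0.le]; push_cast; rfl
  have hx0 : 0 < x := Real.rpow_pos_of_pos hp0 _
  have hx1 : x ≤ 1 / p := by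
    rw [hx, one_div, ← Real.rpow_neg_one]
    exact Real.rpow_le_rpow_of_exponent_le hp1.le (by linarith)
  have hx2 : x ≤ 1 / 2 := hx1.trans (one_div_le_one_div_of_le two_pos hp2)
  have hexp : ∀ y : ℝ, 0 ≤ y → 1 ≤ Real.exp y := fun y hy => Real.one_le_exp hy
  unfold EF
  rw [hxc]
  by_cases h2 : p = 2
  · have e1 : ‖1 - chi k (1, 1) * (x : ℂ)‖ ≤ 1 + x := by
      refine (norm_sub_le _ _).trans ?_
      rw [norm_mul, chi_norm, Complex.norm_real, Real.norm_of_nonneg hx0.le]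
      simp
    have e2 : ‖1 - chi 0 (1, 1) * (x : ℂ)‖ = 1 - x := by
      have : chi 0 (1, 1) = 1 := by simp [chi]
      rw [this, one_mul, ← Complex.ofReal_one, ← Complex.ofReal_sub, Complex.norm_real,
        Real.norm_of_nonneg (by linarith)]
    have e3 : 3 ≤ Real.exp ((if p = 2 then 2 else 0) + 8 * dP k p) := by
      rw [if_pos h2]
      have := Real.add_one_le_exp (2 + 8 * dP k p)
      have := dP_nonneg k p
      linarith
    simp only [aP, bP, if_pos h2, zero_mul, add_zero] at e3 ⊢
    rw [e2]
    refine e1.trans ?_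
    nlinarith
  · by_cases h1 : p % 4 = 1
    · simp only [aP, bP, if_neg h2, if_pos h1, cp_zero]
      have hc : cp p k ≤ 1 := Real.cos_le_one _
      have e1 : (1 : ℂ) - 2 * (cp p k : ℂ) * x + 1 * (x : ℂ) ^ 2 =
          (((1 - x) ^ 2 + 2 * (1 - cp p k) * x : ℝ) : ℂ) := by push_cast; ring
      have e2 : (1 : ℂ) - 2 * ((1 : ℝ) : ℂ) * x + 1 * (x : ℂ) ^ 2 = (((1 - x) ^ 2 : ℝ) : ℂ) := by
        push_cast; ring
      rw [e1, e2, Complex.norm_real, Complex.norm_real, Real.norm_of_nonneg (by positivity),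
        Real.norm_of_nonneg (by nlinarith [sq_nonneg (1 - x)])]
      have e3 := Real.add_one_le_exp (0 + 8 * dP k p)
      have e4 : dP k p = (1 - cp p k) / p := by unfold dP; rw [if_pos ⟨hp, h1⟩]
      have e5 : (1 - cp p k) * x ≤ dP k p := by
        rw [e4, div_eq_mul_one_div]
        exact mul_le_mul_of_nonneg_left hx1 (by linarith)
      have e6 : 1 / 4 ≤ (1 - x) ^ 2 := by nlinarith
      have e7 := dP_nonneg k p
      calc (1 - x) ^ 2 + 2 * (1 - cp p k) * x ≤ (1 - x) ^ 2 * (0 + 8 * dP k p + 1) := by nlinarith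
        _ ≤ _ := by gcongr
    · simp only [aP, bP, if_neg h2, if_neg h1]
      refine le_mul_of_one_le_right (norm_nonneg _) (hexp _ ?_)
      have e7 := dP_nonneg k p
      linarith

theorem dP_not_summable {k : ℤ} (hk : k ≠ 0) : ¬ Summable (dP (4 * k)) := by
  intro hsum
  set j : ℤ := 4 * k with hj
  have hj0 : j ≠ 0 := by omega
  set K : ℝ := Real.exp (2 + 8 * ∑' p, dP j p) with hK
  have hprod : ∀ s : ℝ, 1 < s → ∀ N : ℕ, ∏ p ∈ Finset.range N with p.Prime, ‖EF p j s‖ ≤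
      (∏ p ∈ Finset.range N with p.Prime, ‖EF p 0 s‖) * K := by
    intro s hs N
    calc ∏ p ∈ Finset.range N with p.Prime, ‖EF p j s‖
        ≤ ∏ p ∈ Finset.range N with p.Prime,
          (‖EF p 0 s‖ * Real.exp ((if p = 2 then 2 else 0) + 8 * dP j p)) := by
          refine Finset.prod_le_prod (fun p _ => norm_nonneg _) fun p hp => ?_
          rw [Finset.mem_filter] at hp
          exact EF_le hp.2 j hs
      _ = (∏ p ∈ Finset.range N with p.Prime, ‖EF p 0 s‖) *
          Real.exp (∑ p ∈ Finset.range N with p.Prime, ((if p = 2 then 2 else 0) + 8 * dP j p)) := by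
          rw [Finset.prod_mul_distrib, Real.exp_sum]
      _ ≤ _ := by
          rw [hK]
          gcongr
          rw [Finset.sum_add_distrib, ← Finset.mul_sum]
          have a1 := hsum.sum_le_tsum (Finset.filter (fun p : ℕ => p.Prime) (Finset.range N))
            (fun p _ => dP_nonneg j p)
          have a2 : ∑ p ∈ Finset.range N with p.Prime, (if p = 2 then (2 : ℝ) else 0) ≤ 2 := by
            rw [Finset.sum_ite_eq']
            split_ifs <;> norm_num
          linarith
  have hineq : ∀ s : ℝ, 1 < s → ‖LSeries (fun m => latticeS m 0) s‖ ≤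
      K * ‖LSeries (fun m => latticeS m j) s‖ := by
    intro s hs
    have l1 := (sieve_lim (S_summable j hs)).norm
    have l0 := (sieve_lim (S_summable 0 hs)).norm
    have s1 : latticeS 1 j = 4 := S_one k
    have s0 : latticeS 1 0 = 4 := S_one 0
    simp only [s1, s0] at l1 l0
    have := le_of_tendsto_of_tendsto' (l1.const_mul ‖LSeries (fun m => latticeS m 0) s‖)
      (l0.const_mul (K * ‖LSeries (fun m => latticeS m j) s‖)) (fun N => by
        rw [sieve_prod j hs, sieve_prod 0 hs, norm_mul, norm_mul, norm_prod, norm_prod]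
        have := hprod s hs N
        have b := mul_le_mul_of_nonneg_left this
          (mul_nonneg (norm_nonneg (LSeries (fun m => latticeS m 0) s))
            (norm_nonneg (LSeries (fun m => latticeS m j) s)))
        linarith)
    have h4 : (0 : ℝ) < ‖(4 : ℂ)‖ := by simp
    exact le_of_mul_le_mul_right this h4
  have t1 := (LS_zero hj0).norm.const_mul K
  have t0 := LR_mu.norm
  have := le_of_tendsto_of_tendsto t0 t1 (by
    filter_upwards [self_mem_nhdsWithin] with s hs
    rw [norm_mul, norm_mul]
    have := hineq s hs
    have b := mul_le_mul_of_nonneg_left this (norm_nonneg ((s : ℂ) - 1))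
    linarith)
  rw [norm_zero, mul_zero, Complex.norm_real, Real.norm_of_nonneg mu0_pos.le] at this
  exact absurd mu0_pos (not_lt.mpr this)

end LatCons

end

section

namespace LatCons
open MeasureTheory Filter Topology

/-- real dilation -/
def dilR (p : ℕ) (F : ℕ → ℝ) (m : ℕ) : ℝ := if p ∣ m then F (m / p) else 0

lemma dilR_mul {p : ℕ} (hp : 0 < p) (F : ℕ → ℝ) (n : ℕ) : dilR p F (p * n) = F n := by
  unfold dilR
  rw [if_pos (dvd_mul_right _ _), Nat.mul_div_cancel_left _ hp]

lemma dilR_not {p : ℕ} (F : ℕ → ℝ) {n : ℕ} (h : ¬ p ∣ n) : dilR p F n = 0 := if_neg h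

lemma sum_dilR {p : ℕ} (hp : 0 < p) (F : ℕ → ℝ) (n : ℕ) :
    ∑ m ∈ Finset.Icc 1 n, dilR p F m = ∑ l ∈ Finset.Icc 1 (n / p), F l := by
  have hinj : Function.Injective (fun l : ℕ => p * l) := fun a b hab => Nat.eq_of_mul_eq_mul_left hp hab
  have h1 : ∑ l ∈ Finset.Icc 1 (n / p), F l =
      ∑ m ∈ (Finset.Icc 1 (n / p)).image (fun l : ℕ => p * l), dilR p F m := by
    rw [Finset.sum_image (fun a _ b _ h => hinj h)]
    exact Finset.sum_congr rfl fun l _ => (dilR_mul hp F l).symm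
  rw [h1]
  symm
  apply Finset.sum_subset
  · intro m hm
    rw [Finset.mem_image] at hm
    obtain ⟨l, hl, rfl⟩ := hm
    rw [Finset.mem_Icc] at hl ⊢
    refine ⟨Nat.mul_pos hp (by omega), ?_⟩
    exact (Nat.mul_le_mul_left p hl.2).trans (Nat.mul_div_le n p)
  · intro m hm hn
    apply dilR_not
    rintro ⟨l, rfl⟩
    apply hn
    rw [Finset.mem_Icc] at hm
    rw [Finset.mem_image]
    refine ⟨l, ?_, rfl⟩
    rw [Finset.mem_Icc]
    refine ⟨Nat.pos_of_mul_pos_left hm.1, ?_⟩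
    rw [Nat.le_div_iff_mul_le hp, mul_comm]
    exact hm.2

/-- mean value -/
def HasMean (F : ℕ → ℝ) (μ : ℝ) : Prop :=
  Tendsto (fun n : ℕ => (∑ m ∈ Finset.Icc 1 n, F m) / (n : ℝ)) atTop (𝓝 μ)

lemma HasMean.dil {p : ℕ} (hp : 0 < p) {F : ℕ → ℝ} {μ : ℝ} (h : HasMean F μ) :
    HasMean (dilR p F) (μ / p) := by
  unfold HasMean
  have h1 : Tendsto (fun n : ℕ => n / p) atTop atTop := Nat.tendsto_div_const_atTop hp.ne'
  have h2 := h.comp h1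
  have h3 : Tendsto (fun n : ℕ => ((n / p : ℕ) : ℝ) / (n : ℝ)) atTop (𝓝 (1 / p)) := by
    have := (tendsto_nat_floor_mul_div_atTop (R := ℝ) (a := 1 / p) (by positivity)).comp
      (tendsto_natCast_atTop_atTop (R := ℝ))
    refine this.congr fun n => ?_
    simp only [Function.comp]
    rw [one_div_mul_eq_div, Nat.floor_div_eq_div]
  have h4 := h2.mul h3
  rw [mul_one_div] at h4
  refine h4.congr' ?_
  filter_upwards [h1.eventually_gt_atTop 0] with n hn
  have hn' : ((n / p : ℕ) : ℝ) ≠ 0 := by exact_mod_cast hn.ne'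
  simp only [Function.comp]
  rw [sum_dilR hp, div_mul_div_cancel₀ hn']

lemma HasMean.add {F G : ℕ → ℝ} {μ ν : ℝ} (h : HasMean F μ) (h' : HasMean G ν) :
    HasMean (fun m => F m + G m) (μ + ν) := by
  unfold HasMean
  refine (Tendsto.add h h').congr fun n => ?_
  rw [Finset.sum_add_distrib, add_div]

lemma HasMean.smul {F : ℕ → ℝ} {μ : ℝ} (h : HasMean F μ) (c : ℝ) :
    HasMean (fun m => c * F m) (c * μ) := by
  unfold HasMean
  refine (Tendsto.const_mul c h).congr fun n => ?_
  rw [← Finset.mul_sum, mul_div_assoc]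

lemma HasMean.congr {F G : ℕ → ℝ} {μ : ℝ} (h : HasMean F μ) (hFG : ∀ m, 0 < m → F m = G m) :
    HasMean G μ := by
  unfold HasMean
  refine Tendsto.congr (fun n => ?_) h
  rw [Finset.sum_congr rfl]
  intro m hm
  rw [Finset.mem_Icc] at hm
  exact hFG m hm.1

lemma mean_step {p : ℕ} (hp : p.Prime) {f : ℕ → ℝ} {μ : ℝ} (c : ℝ)
    (h1 : ∀ m, 0 < m → ¬ p ∣ m → f (p * m) = 2 * f m)
    (h2 : ∀ m, 0 < m → f (p * (p * m)) = 2 * f (p * m) - f m)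
    (hf : HasMean f μ) :
    HasMean (fun m => (if p ∣ m ∧ ¬ p * p ∣ m then c else 1) * f m)
      (μ * (1 - (1 - c) * (2 / p) * (1 - 1 / p) ^ 2)) := by
  have d1 := hf.dil hp.pos
  have d2 := d1.dil hp.pos
  have d3 := d2.dil hp.pos
  have key := hf.add ((d1.add ((d2.smul (-2)).add d3)).smul (-(1 - c) * 2))
  have hp0 : (p : ℝ) ≠ 0 := by exact_mod_cast hp.ne_zero
  have hval : μ + -(1 - c) * 2 * (μ / p + (-2 * (μ / p / p) + μ / p / p / p)) =
      μ * (1 - (1 - c) * (2 / p) * (1 - 1 / p) ^ 2) := by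
    field_simp; ring
  rw [hval] at key
  refine key.congr fun m hm => ?_
  by_cases hd : p ∣ m
  · obtain ⟨n, rfl⟩ := hd
    have hn : 0 < n := Nat.pos_of_mul_pos_left hm
    rw [dilR_mul hp.pos, dilR_mul hp.pos, dilR_mul hp.pos]
    have hiff : p ∣ p * n ∧ ¬ p * p ∣ p * n ↔ ¬ p ∣ n := by
      rw [Nat.mul_dvd_mul_iff_left hp.pos]
      simp
    simp only [hiff]
    by_cases hd2 : p ∣ n
    · obtain ⟨l, rfl⟩ := hd2
      have hl : 0 < l := Nat.pos_of_mul_pos_left hn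
      rw [dilR_mul hp.pos, dilR_mul hp.pos, if_neg (by simp), h2 l hl]
      by_cases hd3 : p ∣ l
      · obtain ⟨q, rfl⟩ := hd3
        have hq : 0 < q := Nat.pos_of_mul_pos_left hl
        rw [dilR_mul hp.pos, h2 q hq]
        ring
      · rw [dilR_not _ hd3, h1 l hl hd3]
        ring
    · rw [dilR_not _ hd2, dilR_not _ hd2, if_pos hd2, h1 n hn hd2]
      ring
  · rw [dilR_not _ hd, dilR_not _ hd, dilR_not _ hd, if_neg (fun h => hd h.1)]
    ring

/-- weight -/
noncomputable def uP (k : ℤ) (P : Finset ℕ) (m : ℕ) : ℝ :=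
  ∏ p ∈ P, if p ∣ m ∧ ¬ p * p ∣ m then |cp p k| else 1

lemma uP_mul (k : ℤ) {P : Finset ℕ} (hP : ∀ p ∈ P, p.Prime) {q : ℕ} (hq : q.Prime) (hqP : q ∉ P)
    (m : ℕ) : uP k P (q * m) = uP k P m := by
  unfold uP
  refine Finset.prod_congr rfl fun p hp => ?_
  have hpp := hP p hp
  have hne : p ≠ q := fun h => hqP (h ▸ hp)
  have hc : Nat.Coprime p q := (Nat.coprime_primes hpp hq).mpr hne
  refine if_congr ?_ rfl rfl
  rw [hc.dvd_mul_left, (Nat.Coprime.mul_left hc hc).dvd_mul_left]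

lemma R_rec1 {p : ℕ} (hp : p.Prime) (h1 : p % 4 = 1) (m : ℕ) (hm : 0 < m) (hd : ¬ p ∣ m) :
    (latticeR (p * m) : ℝ) = 2 * latticeR m := by
  have h := (rec_S hp 0).1 m hm hd
  have h2 : p ≠ 2 := by rintro rfl; omega
  simp only [S_zero, aP, if_neg h2, if_pos h1, cp_zero] at h
  exact_mod_cast h

lemma R_rec2 {p : ℕ} (hp : p.Prime) (h1 : p % 4 = 1) (m : ℕ) (hm : 0 < m) :
    (latticeR (p * (p * m)) : ℝ) = 2 * latticeR (p * m) - latticeR m := by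
  have h := (rec_S hp 0).2 m hm
  have h2 : p ≠ 2 := by rintro rfl; omega
  simp only [S_zero, aP, bP, if_neg h2, if_pos h1, cp_zero] at h
  have h' := congrArg Complex.re h
  simpa using h'

lemma S_bound (k : ℤ) (P : Finset ℕ) (hP : ∀ p ∈ P, p.Prime ∧ p % 4 = 1) :
    ∀ m, 0 < m → ‖latticeS m k‖ ≤ uP k P m * latticeR m := by
  induction P using Finset.induction_on with
  | empty =>
    intro m hm
    simpa [uP] using S_le m k
  | insert p P hpP ih =>
    intro m hm
    have hP' : ∀ q ∈ P, q.Prime ∧ q % 4 = 1 := fun q hq => hP q (Finset.mem_insert_of_mem hq)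
    have ih := ih hP'
    obtain ⟨hp, hp1⟩ := hP p (Finset.mem_insert_self p P)
    have e : uP k (insert p P) m = (if p ∣ m ∧ ¬ p * p ∣ m then |cp p k| else 1) * uP k P m := by
      unfold uP
      rw [Finset.prod_insert hpP]
    rw [e]
    split_ifs with h
    · obtain ⟨⟨n, rfl⟩, hnd⟩ := h
      rw [Nat.mul_dvd_mul_iff_left hp.pos] at hnd
      have hn : 0 < n := Nat.pos_of_mul_pos_left hm
      have h2 : p ≠ 2 := by rintro rfl; omega
      have h3 := (rec_S hp k).1 n hn hnd
      simp only [aP, if_neg h2, if_pos hp1] at h3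
      rw [h3, R_rec1 hp hp1 n hn hnd, uP_mul k (fun q hq => (hP' q hq).1) hp hpP, norm_mul, norm_mul,
        Complex.norm_real, Real.norm_eq_abs]
      have h4 := mul_le_mul_of_nonneg_left (ih n hn) (abs_nonneg (cp p k))
      rw [Complex.norm_ofNat]
      linarith
    · rw [one_mul]
      exact ih m hm

lemma uP_mean (k : ℤ) (P : Finset ℕ) (hP : ∀ p ∈ P, p.Prime ∧ p % 4 = 1) :
    HasMean (fun m => uP k P m * latticeR m)
      (mu0 * ∏ p ∈ P, (1 - (1 - |cp p k|) * (2 / p) * (1 - 1 / p) ^ 2)) := by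
  induction P using Finset.induction_on with
  | empty =>
    simpa [uP, HasMean] using avg_R
  | insert p P hpP ih =>
    have hP' : ∀ q ∈ P, q.Prime ∧ q % 4 = 1 := fun q hq => hP q (Finset.mem_insert_of_mem hq)
    have ih := ih hP'
    obtain ⟨hp, hp1⟩ := hP p (Finset.mem_insert_self p P)
    have hu := uP_mul k (fun q hq => (hP' q hq).1) hp hpP
    have h := mean_step hp (f := fun m => uP k P m * latticeR m) |cp p k| (fun m hm hd => by
      simp only [hu]; rw [R_rec1 hp hp1 m hm hd]; ring) (fun m hm => by
      simp only [hu]; rw [R_rec2 hp hp1 m hm]; ring) ih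
    rw [Finset.prod_insert hpP, mul_comm (1 - _) (∏ p ∈ P, _), ← mul_assoc]
    refine h.congr fun m hm => ?_
    unfold uP
    rw [Finset.prod_insert hpP, mul_assoc]

lemma cp_four (p : ℕ) (k : ℤ) : 1 - cp p (4 * k) ≤ 16 * (1 - |cp p k|) := by
  set c := cp p k with hc
  have h1 : cp p (4 * k) = 2 * (2 * c ^ 2 - 1) ^ 2 - 1 := by
    rw [hc]
    unfold cp
    rw [← Real.cos_two_mul, ← Real.cos_two_mul]
    congr 1
    push_cast; ring
  have h2 : |c| ≤ 1 := Real.abs_cos_le_one _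
  have h3 : c ^ 2 = |c| ^ 2 := (sq_abs c).symm
  have h0 := abs_nonneg c
  rw [h1, h3]
  set a := |c|
  have h5 : 1 - (2 * (2 * a ^ 2 - 1) ^ 2 - 1) = 8 * a ^ 2 * (1 + a) * (1 - a) := by ring
  rw [h5]
  have h6 : a ^ 2 * (1 + a) ≤ 2 := by nlinarith [sq_nonneg a]
  nlinarith

theorem S_avg_zero {k : ℤ} (hk : k ≠ 0) : HasMean (fun m => ‖latticeS m k‖) 0 := by
  have hinf := (not_summable_iff_tendsto_nat_atTop_of_nonneg (dP_nonneg (4 * k))).mp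
    (dP_not_summable hk)
  unfold HasMean
  have hexp : Tendsto (fun N : ℕ => mu0 * Real.exp (-((1 / 16) * ∑ p ∈ Finset.range N, dP (4 * k) p)))
      atTop (𝓝 0) := by
    have h1 := Real.tendsto_exp_neg_atTop_nhds_zero.comp
      (hinf.const_mul_atTop (by norm_num : (0 : ℝ) < 1 / 16))
    have := h1.const_mul mu0
    rw [mul_zero] at this
    exact this
  rw [Metric.tendsto_atTop']
  intro ε hε
  obtain ⟨N, hN⟩ := (hexp.eventually_lt_const hε).exists
  set P : Finset ℕ := (Finset.range N).filter (fun p => p.Prime ∧ p % 4 = 1) with hPdef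
  have hP : ∀ p ∈ P, p.Prime ∧ p % 4 = 1 := fun p hp => (Finset.mem_filter.mp hp).2
  have hprod : mu0 * ∏ p ∈ P, (1 - (1 - |cp p k|) * (2 / p) * (1 - 1 / p) ^ 2) < ε := by
    refine lt_of_le_of_lt ?_ hN
    refine mul_le_mul_of_nonneg_left ?_ mu0_pos.le
    have e1 : ∑ p ∈ Finset.range N, dP (4 * k) p = ∑ p ∈ P, (1 - cp p (4 * k)) / p := by
      rw [hPdef, Finset.sum_filter]
      rfl
    rw [e1, Finset.mul_sum, ← Finset.sum_neg_distrib, Real.exp_sum]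
    refine Finset.prod_le_prod ?_ ?_
    · intro p hp
      obtain ⟨hpp, hp1⟩ := hP p hp
      have hp5 : (5 : ℝ) ≤ p := by
        have : 5 ≤ p := by have := hpp.two_le; omega
        exact_mod_cast this
      have hc1 : |cp p k| ≤ 1 := Real.abs_cos_le_one _
      have hc0 := abs_nonneg (cp p k)
      have a1 : (1 : ℝ) / p ≤ 1 / 5 := one_div_le_one_div_of_le (by norm_num) hp5
      have a0 : (0 : ℝ) < 1 / p := by positivity
      have a2 : (2 : ℝ) / p = 2 * (1 / p) := by ring
      rw [a2]
      set x : ℝ := 1 / p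
      have a3 : (1 - x) ^ 2 ≤ 1 := by nlinarith
      have a4 : (1 - |cp p k|) * (2 * x) ≤ 1 := by nlinarith
      have a5 : 0 ≤ (1 - |cp p k|) * (2 * x) := by
        apply mul_nonneg <;> linarith
      nlinarith [sq_nonneg (1 - x)]
    · intro p hp
      obtain ⟨hpp, hp1⟩ := hP p hp
      have hp5 : (5 : ℝ) ≤ p := by
        have : 5 ≤ p := by have := hpp.two_le; omega
        exact_mod_cast this
      have hc1 : |cp p k| ≤ 1 := Real.abs_cos_le_one _
      have a1 : (1 : ℝ) / p ≤ 1 / 5 := one_div_le_one_div_of_le (by norm_num) hp5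
      have a0 : (0 : ℝ) < 1 / p := by positivity
      have a2 : (2 : ℝ) / p = 2 * (1 / p) := by ring
      have a6 := cp_four p k
      refine le_trans ?_ (Real.add_one_le_exp _)
      rw [a2, div_eq_mul_one_div (1 - cp p (4 * k))]
      set x : ℝ := 1 / p
      have a3 : 1 / 2 ≤ (1 - x) ^ 2 := by nlinarith
      have a4 : (1 - cp p (4 * k)) * x ≤ 16 * (1 - |cp p k|) * x :=
        mul_le_mul_of_nonneg_right a6 a0.le
      have a5 : 0 ≤ (1 - |cp p k|) * x := by
        apply mul_nonneg <;> linarith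
      nlinarith
  have hev := (uP_mean k P hP).eventually_lt_const hprod
  obtain ⟨n₀, hn₀⟩ := eventually_atTop.mp hev
  refine ⟨n₀, fun n hn => ?_⟩
  have h1 := hn₀ n hn.le
  rw [dist_zero_right, Real.norm_of_nonneg (by positivity)]
  refine lt_of_le_of_lt ?_ h1
  gcongr with m hm
  rw [Finset.mem_Icc] at hm
  exact S_bound k P hP m hm.1

end LatCons

end

section
open MeasureTheory Filter Topology
namespace LatCons

lemma fc_step {n : ℤ} (hn : n ≠ 0) {f f' : ℝ → ℂ} (hab : -Real.pi < Real.pi)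
    (hf : ∀ x, HasDerivAt f (f' x) x) (hf' : Continuous f') (he : f Real.pi = f (-Real.pi)) :
    ‖fourierCoeffOn hab f n‖ = ‖fourierCoeffOn hab f' n‖ / |(n : ℝ)| := by
  rw [fourierCoeffOn_of_hasDerivAt hab hn (fun x _ => hf x) (hf'.intervalIntegrable _ _), he]
  have hn' : |(n : ℝ)| ≠ 0 := by simpa using hn
  have hp := Real.pi_pos
  have h1 : ‖((Real.pi : ℂ) - ((-Real.pi : ℝ) : ℂ))‖ = 2 * Real.pi := by
    rw [← Complex.ofReal_sub, Complex.norm_real, Real.norm_eq_abs, abs_of_pos (by linarith)]; ring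
  have h2 : ‖(n : ℂ)‖ = |(n : ℝ)| := by
    rw [← Complex.ofReal_intCast, Complex.norm_real, Real.norm_eq_abs]
  rw [sub_self, mul_zero, zero_sub, norm_mul, norm_neg, norm_mul, h1, norm_div, norm_mul, norm_mul,
    norm_mul, h2, norm_neg, Complex.norm_I, Complex.norm_real, Real.norm_eq_abs, abs_of_pos hp,
    Complex.norm_ofNat, norm_one]
  field_simp

lemma fc_bound (n : ℤ) {f : ℝ → ℂ} {C : ℝ} (hab : -Real.pi < Real.pi) (hC : ∀ x, ‖f x‖ ≤ C) :
    ‖fourierCoeffOn hab f n‖ ≤ C := by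
  rw [fourierCoeffOn_eq_integral]
  have hp := Real.pi_pos
  have h := intervalIntegral.norm_integral_le_of_norm_le_const (a := -Real.pi) (b := Real.pi)
    (f := fun x : ℝ => fourier (-n) (x : AddCircle (Real.pi - -Real.pi)) • f x) (C := C) (fun x _ => by
      rw [norm_smul]
      have : ‖fourier (-n) (x : AddCircle (Real.pi - -Real.pi))‖ = 1 := by
        rw [fourier_apply]; exact Circle.norm_coe _
      rw [this, one_mul]; exact hC x)
  rw [norm_smul, Real.norm_eq_abs, abs_of_pos (by apply div_pos <;> linarith)]
  rw [abs_of_pos (by linarith)] at h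
  rw [one_div, inv_mul_le_iff₀ (by linarith)]
  linarith

lemma fourier_exp {f : ℝ → ℝ} (hper : Function.Periodic f (2 * Real.pi)) (hf : ContDiff ℝ 2 f)
    {C : ℝ} (hC : ∀ x, |deriv (deriv f) x| ≤ C) :
    ∃ c : ℤ → ℂ, c 0 = ((1 / (2 * Real.pi) * ∫ x in (-Real.pi)..Real.pi, f x : ℝ) : ℂ) ∧
      (∀ k : ℤ, k ≠ 0 → ‖c k‖ ≤ C / (k : ℝ) ^ 2) ∧
      ∀ x : ℝ, HasSum (fun k : ℤ => c k * Complex.exp ((k : ℂ) * (x : ℂ) * Complex.I)) (f x : ℂ) := by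
  have hp := Real.pi_pos
  have hab : -Real.pi < Real.pi := by linarith
  have hT : Fact (0 < 2 * Real.pi) := ⟨by linarith⟩
  have hperC : Function.Periodic (fun x => (f x : ℂ)) (2 * Real.pi) := fun x => by
    show ((f (x + 2 * Real.pi) : ℝ) : ℂ) = f x
    rw [hper x]
  have hf1 : ContDiff ℝ 1 (deriv f) := by
    have : ContDiff ℝ (1 + 1) f := by rw [one_add_one_eq_two]; exact hf
    exact (contDiff_succ_iff_deriv.mp this).2.2
  have hf0 : Differentiable ℝ f := hf.differentiable (by norm_num)
  have hf1d : Differentiable ℝ (deriv f) := hf1.differentiable (by norm_num)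
  have hf2 : Continuous (deriv (deriv f)) := hf1.continuous_deriv (by norm_num)
  let c : ℤ → ℂ := fun n => fourierCoeffOn hab (fun x => (f x : ℂ)) n
  let F : C(AddCircle (2 * Real.pi), ℂ) :=
    ⟨hperC.lift, by
      refine continuous_coinduced_dom.mpr ?_
      exact (Complex.continuous_ofReal.comp hf.continuous)⟩
  have hFc : ∀ n, fourierCoeff F n = c n := fun n => by
    show _ = fourierCoeffOn hab (fun x => (f x : ℂ)) n
    rw [fourierCoeffOn_eq_integral, fourierCoeff_eq_intervalIntegral _ _ (-Real.pi)]
    have e1 : -Real.pi + 2 * Real.pi = Real.pi := by ring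
    have e2 : Real.pi - -Real.pi = 2 * Real.pi := by ring
    rw [e1]
    rw [e2]
    rfl
  have hb : ∀ k : ℤ, k ≠ 0 → ‖c k‖ ≤ C / (k : ℝ) ^ 2 := fun k hk => by
    have e : Real.pi = -Real.pi + 2 * Real.pi := by ring
    have hdper : Function.Periodic (deriv f) (2 * Real.pi) := fun x => by
      rw [← deriv_comp_add_const]
      congr 1
      exact funext hper
    show ‖fourierCoeffOn hab (fun x => (f x : ℂ)) k‖ ≤ _
    rw [fc_step hk hab (f' := fun x => ((deriv f x : ℝ) : ℂ))
      (fun x => (hf0 x).hasDerivAt.ofReal_comp) (Complex.continuous_ofReal.comp hf1.continuous)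
      (by conv_lhs => rw [e]
          exact hperC _),
      fc_step hk hab (f' := fun x => ((deriv (deriv f) x : ℝ) : ℂ))
      (fun x => (hf1d x).hasDerivAt.ofReal_comp) (Complex.continuous_ofReal.comp hf2)
      (by conv_lhs => rw [e]
          rw [hdper])]
    rw [div_div, abs_mul_abs_self, ← sq]
    gcongr
    exact fc_bound k hab (fun x => by rw [Complex.norm_real]; exact hC x)
  refine ⟨c, ?_, hb, fun x => ?_⟩
  · show fourierCoeffOn hab (fun x => (f x : ℂ)) 0 = _
    rw [fourierCoeffOn_eq_integral]
    have e2 : Real.pi - -Real.pi = 2 * Real.pi := by ring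
    simp only [neg_zero, fourier_zero, one_smul, e2]
    rw [intervalIntegral.integral_ofReal, Complex.real_smul, Complex.ofReal_mul]
  · have hs : Summable (fourierCoeff F) := by
      have h1 : Summable (fun k : ℤ => C / (k : ℝ) ^ 2) := by
        have := (Real.summable_one_div_int_pow (p := 2)).mpr (by norm_num)
        simpa [div_eq_mul_inv] using this.mul_left C
      refine Summable.of_norm_bounded_eventually h1 ?_
      have : ∀ᶠ k : ℤ in cofinite, k ≠ 0 := by
        simpa using (Set.finite_singleton (0:ℤ)).compl_mem_cofinite
      filter_upwards [this] with k hk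
      rw [hFc]; exact hb k hk
    have := has_pointwise_sum_fourier_series_of_summable hs (x : AddCircle (2 * Real.pi))
    convert! this using 2 with k
    rw [hFc, fourier_coe_apply, smul_eq_mul]
    congr 2
    have : (Real.pi : ℂ) ≠ 0 := by exact_mod_cast hp.ne'
    push_cast
    field_simp

lemma S_sum (m : ℕ) (k : ℤ) (t : ℝ) :
    ∑ u ∈ latticeCircle m, Complex.exp ((k : ℂ) * ((latticeTheta u - t : ℝ) : ℂ) * Complex.I)
      = Complex.exp (-((k : ℂ) * (t : ℂ) * Complex.I)) * latticeS m k := by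
  rw [latticeS, Finset.mul_sum]
  refine Finset.sum_congr rfl fun u _ => ?_
  rw [← Complex.exp_add]
  congr 1
  push_cast
  ring

lemma D_bound {f : ℝ → ℝ} (hper : Function.Periodic f (2 * Real.pi)) (hf : ContDiff ℝ 2 f)
    {C : ℝ} (hC : ∀ x, |deriv (deriv f) x| ≤ C) (m : ℕ) (hm : 0 < latticeR m) (t : ℝ) :
    |(1 / (latticeR m : ℝ)) * ∑ u ∈ latticeCircle m, f (latticeTheta u - t)
      - 1 / (2 * Real.pi) * ∫ x in (-Real.pi)..Real.pi, f x|
    ≤ ∑' k : ℤ, (if k = 0 then 0 else C / (k : ℝ) ^ 2 * ‖latticeS m k‖ / latticeR m) := by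
  obtain ⟨c, hc0, hcb, hcs⟩ := fourier_exp hper hf hC
  have hC0 : 0 ≤ C := (abs_nonneg _).trans (hC 0)
  have hr : (0:ℝ) < latticeR m := by exact_mod_cast hm
  have hrc : (latticeR m : ℂ) ≠ 0 := by exact_mod_cast hm.ne'
  have h1 : HasSum (fun k : ℤ => ∑ u ∈ latticeCircle m,
      c k * Complex.exp ((k : ℂ) * ((latticeTheta u - t : ℝ) : ℂ) * Complex.I))
      (∑ u ∈ latticeCircle m, (f (latticeTheta u - t) : ℂ)) :=
    hasSum_sum fun u _ => hcs _
  simp only [← Finset.mul_sum, S_sum] at h1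
  have h2 := h1.mul_left (1 / (latticeR m : ℂ))
  have h3 := h2.sub (hasSum_ite_eq (0 : ℤ) (c 0))
  have hsum : Summable (fun k : ℤ => if k = 0 then 0 else C / (k : ℝ) ^ 2 * ‖latticeS m k‖ / latticeR m) := by
    have h1 : Summable (fun k : ℤ => C / (k : ℝ) ^ 2) := by
      have := (Real.summable_one_div_int_pow (p := 2)).mpr (by norm_num)
      simpa [div_eq_mul_inv] using this.mul_left C
    refine h1.of_nonneg_of_le (fun k => ?_) (fun k => ?_)
    · split_ifs <;> positivity
    · split_ifs
      · positivity
      · rw [mul_div_assoc]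
        refine mul_le_of_le_one_right (by positivity) ?_
        rw [div_le_one hr]; exact S_le m k
  have h4 := h3.norm_le_of_bounded hsum.hasSum (fun k => ?_)
  · rw [hc0] at h4
    rw [← Real.norm_eq_abs, ← Complex.norm_real]
    push_cast at h4 ⊢
    exact h4
  · split_ifs with hk
    · subst hk
      rw [S_zero]
      simp [field]
    · rw [sub_zero, norm_mul, norm_mul, norm_mul]
      have e1 : ‖Complex.exp (-((k : ℂ) * (t : ℂ) * Complex.I))‖ = 1 := by
        have : -((k : ℂ) * (t : ℂ) * Complex.I) = ((-(k * t) : ℝ) : ℂ) * Complex.I := by push_cast; ring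
        rw [this, Complex.norm_exp_ofReal_mul_I]
      rw [e1, one_mul, norm_div, norm_one, Complex.norm_natCast]
      rw [one_div, inv_mul_eq_div]
      gcongr
      exact hcb k hk
end LatCons

end

section
open MeasureTheory Filter Topology
namespace LatCons

noncomputable def AA (C : ℝ) (m : ℕ) : ℝ :=
  ∑' k : ℤ, (if k = 0 then 0 else C / (k : ℝ) ^ 2 * ‖latticeS m k‖)

lemma AA_summable_base (C : ℝ) : Summable (fun k : ℤ => C / (k : ℝ) ^ 2) := by
  have := (Real.summable_one_div_int_pow (p := 2)).mpr (by norm_num)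
  simpa [div_eq_mul_inv] using this.mul_left C

lemma AA_summable {C : ℝ} (hC : 0 ≤ C) (m : ℕ) :
    Summable (fun k : ℤ => if k = 0 then 0 else C / (k : ℝ) ^ 2 * ‖latticeS m k‖) := by
  refine ((AA_summable_base C).mul_right (latticeR m : ℝ)).of_nonneg_of_le (fun k => ?_) (fun k => ?_)
  · split_ifs <;> positivity
  · split_ifs
    · positivity
    · exact mul_le_mul_of_nonneg_left (S_le m k) (by positivity)

lemma AA_nonneg {C : ℝ} (hC : 0 ≤ C) (m : ℕ) : 0 ≤ AA C m :=
  tsum_nonneg fun k => by split_ifs <;> positivity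

lemma AA_mean {C : ℝ} (hC : 0 ≤ C) : HasMean (AA C) 0 := by
  obtain ⟨K, hK⟩ := avg_R.bddAbove_range
  have hK' : ∀ n : ℕ, (∑ m ∈ Finset.Icc 1 n, (latticeR m : ℝ)) / n ≤ K := fun n => hK ⟨n, rfl⟩
  have hK0 : 0 ≤ K := le_trans (by positivity) (hK' 0)
  have key : ∀ n : ℕ, (∑ m ∈ Finset.Icc 1 n, AA C m) / (n : ℝ) =
      ∑' k : ℤ, (if k = 0 then 0 else
        C / (k : ℝ) ^ 2 * ((∑ m ∈ Finset.Icc 1 n, ‖latticeS m k‖) / (n : ℝ))) := fun n => by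
    unfold AA
    rw [← Summable.tsum_finsetSum (fun m _ => AA_summable hC m), ← tsum_div_const]
    refine tsum_congr fun k => ?_
    split_ifs
    · simp
    · rw [← Finset.mul_sum, mul_div_assoc]
  unfold HasMean
  simp only [key]
  have := tendsto_tsum_of_dominated_convergence (β := ℤ) (𝓕 := atTop (α := ℕ))
    (f := fun n k => (if k = 0 then 0 else
        C / (k : ℝ) ^ 2 * ((∑ m ∈ Finset.Icc 1 n, ‖latticeS m k‖) / (n : ℝ))))
    (g := fun _ => (0:ℝ)) ((AA_summable_base C).mul_right K) (fun k => ?_) (Eventually.of_forall fun n k => ?_)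
  · simpa using this
  · split_ifs with hk
    · exact tendsto_const_nhds
    · simpa using (S_avg_zero hk).const_mul (C / (k : ℝ) ^ 2)
  · split_ifs
    · rw [norm_zero]; positivity
    · rw [Real.norm_of_nonneg (by positivity)]
      refine mul_le_mul_of_nonneg_left (le_trans ?_ (hK' n)) (by positivity)
      gcongr
      exact S_le _ k

lemma D_bound' {f : ℝ → ℝ} (hper : Function.Periodic f (2 * Real.pi)) (hf : ContDiff ℝ 2 f)
    {C : ℝ} (hC : ∀ x, |deriv (deriv f) x| ≤ C) (m : ℕ) (hm : 0 < latticeR m) (t : ℝ) :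
    |(1 / (latticeR m : ℝ)) * ∑ u ∈ latticeCircle m, f (latticeTheta u - t)
      - 1 / (2 * Real.pi) * ∫ x in (-Real.pi)..Real.pi, f x| ≤ AA C m / latticeR m := by
  refine (D_bound hper hf hC m hm t).trans_eq ?_
  unfold AA
  rw [← tsum_div_const]
  refine tsum_congr fun k => ?_
  split_ifs <;> simp

noncomputable def MM (R h : ℝ) : ℕ := ⌊(R / h) ^ 2⌋₊

lemma MM_iff {R h : ℝ} (hh : 0 < h) (n : ℤ) : h ^ 2 * (n : ℝ) ≤ R ^ 2 ↔ n ≤ (MM R h : ℤ) := by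
  unfold MM
  rw [Int.natCast_floor_eq_floor (by positivity), Int.le_floor, div_pow, le_div_iff₀ (by positivity),
    mul_comm]

lemma MM_le {R h : ℝ} (hh : 0 < h) : h ^ 2 * (MM R h : ℝ) ≤ R ^ 2 := by
  have := (MM_iff (R := R) hh (MM R h : ℤ)).mpr le_rfl
  exact_mod_cast this

lemma MM_tendsto {R : ℝ} (hR : 0 < R) : Tendsto (MM R) (𝓝[>] 0) atTop := by
  unfold MM
  refine tendsto_nat_floor_atTop.comp ?_
  refine (tendsto_pow_atTop (by norm_num)).comp ?_
  show Tendsto (fun h : ℝ => R * h⁻¹) _ _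
  exact tendsto_inv_nhdsGT_zero.const_mul_atTop hR

lemma err_tendsto {C R : ℝ} (hC : 0 ≤ C) (hR : 0 < R) :
    Tendsto (fun h : ℝ => h ^ 2 * ∑ m ∈ Finset.Icc 1 (MM R h), AA C m) (𝓝[>] 0) (𝓝 0) := by
  have h1 := ((AA_mean hC).comp (MM_tendsto hR)).const_mul (R ^ 2)
  rw [mul_zero] at h1
  refine tendsto_of_tendsto_of_tendsto_of_le_of_le' tendsto_const_nhds h1 ?_ ?_
  · exact Eventually.of_forall fun h => mul_nonneg (sq_nonneg _) (Finset.sum_nonneg fun m _ => AA_nonneg hC m)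
  · filter_upwards [self_mem_nhdsWithin] with h hh
    have hh : 0 < h := hh
    show _ ≤ R ^ 2 * ((∑ m ∈ Finset.Icc 1 (MM R h), AA C m) / (MM R h : ℝ))
    have hs : 0 ≤ ∑ m ∈ Finset.Icc 1 (MM R h), AA C m := Finset.sum_nonneg fun m _ => AA_nonneg hC m
    rcases Nat.eq_zero_or_pos (MM R h) with h0 | h0
    · simp [h0]
    · have h0' : (0:ℝ) < MM R h := by exact_mod_cast h0
      rw [← mul_div_assoc, le_div_iff₀ h0']
      nlinarith [mul_le_mul_of_nonneg_right (MM_le (R := R) hh) hs]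

lemma Qdisc_eq (g : ℝ × ℝ → ℝ → ℝ) {h R : ℝ} (hh : 0 < h) :
    Qdisc g h R = h ^ 2 * ∑ ζ ∈ pd (MM R h), (1 / (latticeR (ζ.1 ^ 2 + ζ.2 ^ 2).toNat : ℝ)) *
        ∑ ζ' ∈ latticeCircle (ζ.1 ^ 2 + ζ.2 ^ 2).toNat,
          g (h * (ζ.1 : ℝ), h * (ζ.2 : ℝ)) (latticeTheta ζ' - latticeTheta ζ) := by
  unfold Qdisc
  have : {ζ : ℤ × ℤ | ζ ≠ 0 ∧ h ^ 2 * ((ζ.1 : ℝ) ^ 2 + (ζ.2 : ℝ) ^ 2) ≤ R ^ 2}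
      = ((pd (MM R h) : Finset (ℤ × ℤ)) : Set (ℤ × ℤ)) := by
    ext ζ
    rw [Finset.mem_coe, mem_pd, ← MM_iff hh]
    push_cast
    rfl
  rw [this, finsum_mem_coe_finset]

lemma Q_err (g : ℝ × ℝ → ℝ → ℝ)
    (hper : ∀ w, Function.Periodic (g w) (2 * Real.pi)) (hθ2 : ∀ w, ContDiff ℝ 2 (g w))
    {C : ℝ} (hC : ∀ w θ, |deriv (deriv (g w)) θ| ≤ C) {h R : ℝ} (hh : 0 < h) :
    |Qdisc g h R - h ^ 2 * ∑ ζ ∈ pd (MM R h), 1 / (2 * Real.pi) *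
      ∫ x in (-Real.pi)..Real.pi, g (h * (ζ.1 : ℝ), h * (ζ.2 : ℝ)) x| ≤
    h ^ 2 * ∑ m ∈ Finset.Icc 1 (MM R h), AA C m := by
  have hC0 : 0 ≤ C := (abs_nonneg _).trans (hC 0 0)
  rw [Qdisc_eq g hh, ← mul_sub, ← Finset.sum_sub_distrib, abs_mul, abs_of_nonneg (sq_nonneg h)]
  refine mul_le_mul_of_nonneg_left ?_ (sq_nonneg h)
  refine (Finset.abs_sum_le_sum_abs _ _).trans ?_
  rw [sum_pd]
  refine Finset.sum_le_sum fun m _ => ?_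
  have : ∀ ζ ∈ latticeCircle m, |(1 / (latticeR (ζ.1 ^ 2 + ζ.2 ^ 2).toNat : ℝ)) *
        ∑ ζ' ∈ latticeCircle (ζ.1 ^ 2 + ζ.2 ^ 2).toNat,
          g (h * (ζ.1 : ℝ), h * (ζ.2 : ℝ)) (latticeTheta ζ' - latticeTheta ζ) - 1 / (2 * Real.pi) *
      ∫ x in (-Real.pi)..Real.pi, g (h * (ζ.1 : ℝ), h * (ζ.2 : ℝ)) x| ≤ AA C m / latticeR m := by
    intro ζ hζ
    have e : (ζ.1 ^ 2 + ζ.2 ^ 2).toNat = m := by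
      rw [mem_circle.mp hζ]; simp
    rw [e]
    exact D_bound' (hper _) (hθ2 _) (hC _) m (Finset.card_pos.mpr ⟨ζ, hζ⟩) _
  refine (Finset.sum_le_card_nsmul _ _ _ this).trans ?_
  rw [nsmul_eq_mul]
  show (latticeR m : ℝ) * _ ≤ _
  rcases Nat.eq_zero_or_pos (latticeR m) with h0 | h0
  · rw [h0]; simpa using AA_nonneg hC0 m
  · have h0' : (latticeR m : ℝ) ≠ 0 := by exact_mod_cast h0.ne'
    rw [mul_div_cancel₀ _ h0']
end LatCons

end

section
open MeasureTheory Filter Topology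
namespace LatCons

lemma consist (g : ℝ × ℝ → ℝ → ℝ)
    (hper : ∀ w, Function.Periodic (g w) (2 * Real.pi))
    (hw1 : ∀ θ, ContDiff ℝ 1 (fun w => g w θ))
    (hwbdd : ∃ C : ℝ, ∀ w θ, |g w θ| ≤ C ∧ ‖fderiv ℝ (fun w' => g w' θ) w‖ ≤ C)
    (hθ2 : ∀ w, ContDiff ℝ 2 (g w))
    (hθbdd : ∃ C : ℝ, ∀ w θ, |deriv (deriv (g w)) θ| ≤ C)
    (hint : ∀ θ, MeasureTheory.Integrable (fun w : ℝ × ℝ => |g w θ| * (1 + ‖w‖ ^ 2)))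
    (hC0 : ∃ C₀ : ℝ, ∀ θ, (∫ w : ℝ × ℝ, |g w θ| * (1 + ‖w‖ ^ 2)) ≤ C₀) :
    ∀ ε > (0 : ℝ), ∃ R > (0 : ℝ), ∃ h₀ > (0 : ℝ), ∀ h : ℝ, 0 < h → h ≤ h₀ →
      |Qcont g - Qdisc g h R| ≤ ε := by
  obtain ⟨C, hC⟩ := hwbdd
  obtain ⟨C₂, hC₂⟩ := hθbdd
  obtain ⟨C₀, hC₀⟩ := hC0
  have hCn : 0 ≤ C := (abs_nonneg _).trans (hC 0 0).1
  have hC₂n : 0 ≤ C₂ := (abs_nonneg _).trans (hC₂ 0 0)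
  have hp := Real.pi_pos
  have hlip : ∀ θ, LipschitzWith ⟨C, hCn⟩ (fun w => g w θ) := fun θ =>
    lipschitzWith_of_nnnorm_fderiv_le ((hw1 θ).differentiable (by norm_num)) (fun w => (hC w θ).2)
  have hcont : Continuous (fun p : (ℝ × ℝ) × ℝ => g p.1 p.2) :=
    continuous_prod_of_continuous_lipschitzWith _ ⟨C, hCn⟩ (fun w => (hθ2 w).continuous) hlip
  set G : ℝ × ℝ → ℝ := fun w => 1 / (2 * Real.pi) * ∫ θ in (-Real.pi)..Real.pi, g w θ with hG
  have hGc : Continuous G := by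
    refine continuous_const.mul ?_
    exact intervalIntegral.continuous_parametric_intervalIntegral_of_continuous' (f := g) hcont _ _
  have hGb : ∀ w, ‖G w‖ ≤ C := fun w => by
    have h := intervalIntegral.norm_integral_le_of_norm_le_const (a := -Real.pi) (b := Real.pi)
      (f := g w) (C := C) (fun x _ => (hC w x).1)
    rw [abs_of_pos (by linarith)] at h
    rw [hG, norm_mul, Real.norm_eq_abs (1 / _), abs_of_pos (by positivity), one_div,
      inv_mul_le_iff₀ (by linarith)]
    linarith
  have hgi : ∀ θ, Integrable (fun w => g w θ) := fun θ => by
    refine (hint θ).mono' (hlip θ).continuous.aestronglyMeasurable (Eventually.of_forall fun w => ?_)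
    rw [Real.norm_eq_abs]
    exact le_mul_of_one_le_right (abs_nonneg _) (by nlinarith [sq_nonneg ‖w‖])
  have hGi : Integrable G := by
    refine Integrable.const_mul ?_ _
    have hprod : Integrable (fun p : (ℝ × ℝ) × ℝ => g p.1 p.2)
        (volume.prod (volume.restrict (Set.Ioc (-Real.pi) Real.pi))) := by
      rw [integrable_prod_iff' hcont.aestronglyMeasurable]
      refine ⟨Eventually.of_forall hgi, ?_⟩
      refine Integrable.of_bound (C := C₀) ?_ (Eventually.of_forall fun θ => ?_)
      · exact (StronglyMeasurable.integral_prod_left' (μ := (volume : Measure (ℝ × ℝ)))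
          (f := fun p : (ℝ × ℝ) × ℝ => ‖g p.1 p.2‖) hcont.norm.stronglyMeasurable).aestronglyMeasurable
      · rw [Real.norm_of_nonneg (integral_nonneg fun _ => norm_nonneg _)]
        refine le_trans ?_ (hC₀ θ)
        refine integral_mono (hgi θ).norm (hint θ) fun w => ?_
        rw [Real.norm_eq_abs]
        exact le_mul_of_one_le_right (abs_nonneg _) (by nlinarith [sq_nonneg ‖w‖])
    have := hprod.integral_prod_left
    simpa [intervalIntegral.integral_of_le (by linarith : -Real.pi ≤ Real.pi)] using this
  have htail : Tendsto (fun n : ℕ => ∫ w in disc (n : ℝ), G w) atTop (𝓝 (∫ w, G w)) := by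
    have hU : (⋃ n : ℕ, disc (n : ℝ)) = Set.univ := by
      refine Set.eq_univ_of_forall fun w => Set.mem_iUnion.mpr ?_
      obtain ⟨n, hn⟩ := exists_nat_ge (w.1 ^ 2 + w.2 ^ 2 + 1)
      refine ⟨n, ?_⟩
      show w.1 ^ 2 + w.2 ^ 2 ≤ (n : ℝ) ^ 2
      nlinarith [sq_nonneg w.1, sq_nonneg w.2]
    have := tendsto_setIntegral_of_monotone (μ := volume) (f := G) (s := fun n : ℕ => disc (n : ℝ))
      (fun n => (disc_closed _).measurableSet) (fun a b hab w hw => by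
        have hw : w.1 ^ 2 + w.2 ^ 2 ≤ (a : ℝ) ^ 2 := hw
        show w.1 ^ 2 + w.2 ^ 2 ≤ (b : ℝ) ^ 2
        refine hw.trans ?_
        gcongr) (by rw [hU]; exact hGi.integrableOn)
    rwa [hU, Measure.restrict_univ] at this
  intro ε hε
  obtain ⟨n, hn1, hn2⟩ := ((htail.eventually (Metric.ball_mem_nhds _ (by positivity : 0 < ε / 4))).and
    (eventually_ge_atTop 1)).exists
  have hR : (0:ℝ) < n := by exact_mod_cast hn2
  obtain ⟨R, hRn⟩ : ∃ R : ℝ, R = (n : ℝ) := ⟨_, rfl⟩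
  rw [← hRn] at hn1 hR
  refine ⟨R, hR, ?_⟩
  have h1 := riemann_disc G hR.le hGb (Eventually.of_forall fun w => hGc.continuousAt)
  have h2 := err_tendsto hC₂n hR
  have h3 : Tendsto (fun h : ℝ => h ^ 2 * G 0) (𝓝[>] 0) (𝓝 0) := by
    have : Tendsto (fun h : ℝ => h ^ 2 * G 0) (𝓝 0) (𝓝 (0 ^ 2 * G 0)) := by
      apply Continuous.tendsto; fun_prop
    simpa using this.mono_left nhdsWithin_le_nhds
  have ev := ((h1.eventually (Metric.ball_mem_nhds _ (by positivity : 0 < ε / 4))).and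
    (h2.eventually (Metric.ball_mem_nhds _ (by positivity : 0 < ε / 4)))).and
    (h3.eventually (Metric.ball_mem_nhds _ (by positivity : 0 < ε / 4)))
  obtain ⟨h₀, hh₀, hsub⟩ := mem_nhdsGT_iff_exists_Ioc_subset.mp ev
  refine ⟨h₀, hh₀, fun h hh hle => ?_⟩
  obtain ⟨⟨b1, b2⟩, b3⟩ := hsub ⟨hh, hle⟩
  have b4 := Q_err g hper hθ2 hC₂ (R := R) hh
  rw [finsum_disc G hh (MM R h) (MM_iff hh)] at b1
  simp only [Metric.mem_ball, Real.dist_eq, smul_eq_mul, sub_zero] at b1 b2 b3 hn1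
  have b5 : |Qdisc g h R - h ^ 2 * ∑ ζ ∈ pd (MM R h), G (h * (ζ.1 : ℝ), h * (ζ.2 : ℝ))| < ε / 4 :=
    (b4.trans (le_abs_self _)).trans_lt b2
  have e : Qcont g = ∫ w, G w := rfl
  rw [e]
  rw [mul_add] at b1
  rw [abs_lt] at b1 b3 b5 hn1
  rw [abs_le]
  constructor <;> linarith [b1.1, b1.2, b3.1, b3.2, b5.1, b5.2, hn1.1, hn1.2]
end LatCons

end

/-- Consistency with explicit truncation: for every `ε > 0` there are `R > 0` and
`h₀ > 0` such that `|Q - Q^{h,R}| ≤ ε` for all `0 < h ≤ h₀`. -/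
theorem consistency_truncated
    (g : ℝ × ℝ → ℝ → ℝ)
    (hper : ∀ w, Function.Periodic (g w) (2 * Real.pi))
    (hw1 : ∀ θ, ContDiff ℝ 1 (fun w => g w θ))
    (hwbdd : ∃ C : ℝ, ∀ w θ, |g w θ| ≤ C ∧ ‖fderiv ℝ (fun w' => g w' θ) w‖ ≤ C)
    (hθ2 : ∀ w, ContDiff ℝ 2 (g w))
    (hθbdd : ∃ C : ℝ, ∀ w θ, |deriv (deriv (g w)) θ| ≤ C)
    (hint : ∀ θ, MeasureTheory.Integrable (fun w : ℝ × ℝ => |g w θ| * (1 + ‖w‖ ^ 2)))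
    (hC0 : ∃ C₀ : ℝ, ∀ θ, (∫ w : ℝ × ℝ, |g w θ| * (1 + ‖w‖ ^ 2)) ≤ C₀) :
    ∀ ε > (0 : ℝ), ∃ R > (0 : ℝ), ∃ h₀ > (0 : ℝ), ∀ h : ℝ, 0 < h → h ≤ h₀ →
      |Qcont g - Qdisc g h R| ≤ ε := by
  exact LatCons.consist g hper hw1 hwbdd hθ2 hθbdd hint hC0
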